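/- arXiv:2603.18269 — 3 statements merged into one kernel-verified Lean document; each statement's English description precedes it below -/
import Mathlib

section
/- Equip C(𝒫;ℝ) with the sup norm ‖u‖∞ and C(𝒫;ℝ)⁴ with the norm ‖N‖ = max_{1≤i≤4} ‖N_i‖∞. Then for every σ > 0 the operator 𝒯^σ : C(𝒫;ℝ)⁴ → C(𝒫;ℝ)⁴ is continuous. -/
open Set MeasureTheory

noncomputable section

/-- The Broadwell collision term `Q(N) = 2cS (N₂N₃ - N₁N₄)` (indexing `N₁ = M 0`, …). -/
def QQ (c S : ℝ) (M : Fin 4 → ℝ → ℝ → ℝ → ℝ) (t x y : ℝ) : ℝ :=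
  2 * c * S * (M 1 t x y * M 2 t x y - M 0 t x y * M 3 t x y)

/-- Signs of `Q` in the four Broadwell equations. -/
def sgn4 : Fin 4 → ℝ := ![1, -1, -1, 1]

/-- `x`-components of the four velocities. -/
def spX (c : ℝ) : Fin 4 → ℝ := ![c, 0, 0, -c]

/-- `y`-components of the four velocities. -/
def spY (c : ℝ) : Fin 4 → ℝ := ![0, c, -c, 0]

/-- Partial derivative in `t`. -/
def pdtF (f : ℝ → ℝ → ℝ → ℝ) (t x y : ℝ) : ℝ := deriv (fun s => f s x y) t

/-- Partial derivative in `x`. -/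
def pdxF (f : ℝ → ℝ → ℝ → ℝ) (t x y : ℝ) : ℝ := deriv (fun s => f t s y) x

/-- Partial derivative in `y`. -/
def pdyF (f : ℝ → ℝ → ℝ → ℝ) (t x y : ℝ) : ℝ := deriv (fun s => f t x s) y

/-- `f` possesses all three first-order partial derivatives at `p`. -/
def HasPartials (f : ℝ → ℝ → ℝ → ℝ) (p : ℝ × ℝ × ℝ) : Prop :=
  DifferentiableAt ℝ (fun s => f s p.2.1 p.2.2) p.1 ∧
  DifferentiableAt ℝ (fun s => f p.1 s p.2.2) p.2.1 ∧
  DifferentiableAt ℝ (fun s => f p.1 p.2.1 s) p.2.2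

/-- Continuity of a curried function of three real variables on a set. -/
def Cont3 (f : ℝ → ℝ → ℝ → ℝ) (D : Set (ℝ × ℝ × ℝ)) : Prop :=
  ContinuousOn (fun p : ℝ × ℝ × ℝ => f p.1 p.2.1 p.2.2) D

/-- Sup norm over `D` of a function of three variables. -/
def supNorm3 (D : Set (ℝ × ℝ × ℝ)) (f : ℝ → ℝ → ℝ → ℝ) : ℝ :=
  sSup ((fun p : ℝ × ℝ × ℝ => |f p.1 p.2.1 p.2.2|) '' D)

/-- `‖N‖ = max_i ‖N_i‖_∞` over `D`. -/
def norm4 (D : Set (ℝ × ℝ × ℝ)) (M : Fin 4 → ℝ → ℝ → ℝ → ℝ) : ℝ :=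
  max (max (supNorm3 D (M 0)) (supNorm3 D (M 1))) (max (supNorm3 D (M 2)) (supNorm3 D (M 3)))

/-- Sup norm over `D` of a function of two variables. -/
def supNorm2 (D : Set (ℝ × ℝ)) (f : ℝ → ℝ → ℝ) : ℝ :=
  sSup ((fun p : ℝ × ℝ => |f p.1 p.2|) '' D)

/-- `‖g‖₁` for a function of two variables: max of the sup norms of `g` and its two
first-order partial derivatives over `D`. -/
def norm1Two (D : Set (ℝ × ℝ)) (f : ℝ → ℝ → ℝ) : ℝ :=
  max (supNorm2 D f)
    (max (supNorm2 D (fun a b => deriv (fun u => f u b) a))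
      (supNorm2 D (fun a b => deriv (fun v => f a v) b)))

/-- The space-time slab `T × [a₁,b₁] × [a₂,b₂]`. -/
def PsetT (T : Set ℝ) (a₁ b₁ a₂ b₂ : ℝ) : Set (ℝ × ℝ × ℝ) := T ×ˢ Icc a₁ b₁ ×ˢ Icc a₂ b₂

/-- The spatial rectangle `[a₁,b₁] × [a₂,b₂]`. -/
def Rect2 (a₁ b₁ a₂ b₂ : ℝ) : Set (ℝ × ℝ) := Icc a₁ b₁ ×ˢ Icc a₂ b₂

/-- A function of two variables which is continuous and bounded on `D` with continuous
and bounded first-order partial derivatives on `D`. -/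
def Smooth2 (D : Set (ℝ × ℝ)) (f : ℝ → ℝ → ℝ) : Prop :=
  ContinuousOn (fun p : ℝ × ℝ => f p.1 p.2) D ∧
  (∀ p ∈ D, DifferentiableAt ℝ (fun u => f u p.2) p.1 ∧
    DifferentiableAt ℝ (fun v => f p.1 v) p.2) ∧
  ContinuousOn (fun p : ℝ × ℝ => deriv (fun u => f u p.2) p.1) D ∧
  ContinuousOn (fun p : ℝ × ℝ => deriv (fun v => f p.1 v) p.2) D ∧
  ∃ C, ∀ p ∈ D, |f p.1 p.2| ≤ C ∧
    |deriv (fun u => f u p.2) p.1| ≤ C ∧ |deriv (fun v => f p.1 v) p.2| ≤ C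

/-- Nonnegativity of a function of two variables on `D`. -/
def Nonneg2 (D : Set (ℝ × ℝ)) (f : ℝ → ℝ → ℝ) : Prop := ∀ p ∈ D, 0 ≤ f p.1 p.2

/-- The initial data `N0` and boundary data `B1, B2, B3, B4` are nonnegative, continuous
and bounded with continuous bounded first-order partial derivatives, and satisfy the
compatibility conditions at time `t0`. -/
def NiceData (T : Set ℝ) (t0 a₁ b₁ a₂ b₂ : ℝ) (N0 : Fin 4 → ℝ → ℝ → ℝ)
    (B1 B2 B3 B4 : ℝ → ℝ → ℝ) : Prop :=
  (∀ i, Smooth2 (Rect2 a₁ b₁ a₂ b₂) (N0 i) ∧ Nonneg2 (Rect2 a₁ b₁ a₂ b₂) (N0 i)) ∧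
  (Smooth2 (T ×ˢ Icc a₂ b₂) B1 ∧ Nonneg2 (T ×ˢ Icc a₂ b₂) B1) ∧
  (Smooth2 (T ×ˢ Icc a₁ b₁) B2 ∧ Nonneg2 (T ×ˢ Icc a₁ b₁) B2) ∧
  (Smooth2 (T ×ˢ Icc a₁ b₁) B3 ∧ Nonneg2 (T ×ˢ Icc a₁ b₁) B3) ∧
  (Smooth2 (T ×ˢ Icc a₂ b₂) B4 ∧ Nonneg2 (T ×ˢ Icc a₂ b₂) B4) ∧
  (∀ y ∈ Icc a₂ b₂, N0 0 a₁ y = B1 t0 y) ∧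
  (∀ x ∈ Icc a₁ b₁, N0 1 x a₂ = B2 t0 x) ∧
  (∀ x ∈ Icc a₁ b₁, N0 2 x b₂ = B3 t0 x) ∧
  (∀ y ∈ Icc a₂ b₂, N0 3 b₁ y = B4 t0 y)

/-- `N` is a classical solution of the initial-boundary value problem for the planar
four-velocity Broadwell model on `T × [a₁,b₁] × [a₂,b₂]`, with initial time `t0`,
initial data `N0` and boundary data `B1, B2, B3, B4`. -/
def IsSol (c S : ℝ) (T : Set ℝ) (t0 a₁ b₁ a₂ b₂ : ℝ) (N0 : Fin 4 → ℝ → ℝ → ℝ)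
    (B1 B2 B3 B4 : ℝ → ℝ → ℝ) (N : Fin 4 → ℝ → ℝ → ℝ → ℝ) : Prop :=
  (∀ i, Cont3 (N i) (PsetT T a₁ b₁ a₂ b₂)) ∧
  (∀ i, ∀ p ∈ interior (PsetT T a₁ b₁ a₂ b₂), HasPartials (N i) p) ∧
  (∀ i, ∀ p ∈ interior (PsetT T a₁ b₁ a₂ b₂),
    pdtF (N i) p.1 p.2.1 p.2.2 + spX c i * pdxF (N i) p.1 p.2.1 p.2.2 +
      spY c i * pdyF (N i) p.1 p.2.1 p.2.2 = sgn4 i * QQ c S N p.1 p.2.1 p.2.2) ∧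
  (∀ i, ∀ x ∈ Icc a₁ b₁, ∀ y ∈ Icc a₂ b₂, N i t0 x y = N0 i x y) ∧
  (∀ t ∈ T, ∀ y ∈ Icc a₂ b₂, N 0 t a₁ y = B1 t y) ∧
  (∀ t ∈ T, ∀ x ∈ Icc a₁ b₁, N 1 t x a₂ = B2 t x) ∧
  (∀ t ∈ T, ∀ x ∈ Icc a₁ b₁, N 2 t x b₂ = B3 t x) ∧
  (∀ t ∈ T, ∀ y ∈ Icc a₂ b₂, N 3 t b₁ y = B4 t y)

/-- The operator `𝒯`, defined by integration along the characteristics. -/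
def Tcal (c S τ a₁ b₁ a₂ b₂ : ℝ) (N0 : Fin 4 → ℝ → ℝ → ℝ) (B1 B2 B3 B4 : ℝ → ℝ → ℝ)
    (M : Fin 4 → ℝ → ℝ → ℝ → ℝ) : Fin 4 → ℝ → ℝ → ℝ → ℝ :=
  ![fun t x y =>
      if a₁ ≤ x - c * (t - τ) then
        (∫ s in τ..t, QQ c S M s (x + c * (s - t)) y) + N0 0 (x - c * (t - τ)) y
      else
        (∫ s in (t - (x - a₁) / c)..t, QQ c S M s (x + c * (s - t)) y) +
          B1 (t - (x - a₁) / c) y,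
    fun t x y =>
      if a₂ ≤ y - c * (t - τ) then
        (∫ s in τ..t, -QQ c S M s x (y + c * (s - t))) + N0 1 x (y - c * (t - τ))
      else
        (∫ s in (t - (y - a₂) / c)..t, -QQ c S M s x (y + c * (s - t))) +
          B2 (t - (y - a₂) / c) x,
    fun t x y =>
      if y + c * (t - τ) ≤ b₂ then
        (∫ s in τ..t, -QQ c S M s x (y - c * (s - t))) + N0 2 x (y + c * (t - τ))
      else
        (∫ s in (t - (b₂ - y) / c)..t, -QQ c S M s x (y - c * (s - t))) +
          B3 (t - (b₂ - y) / c) x,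
    fun t x y =>
      if x + c * (t - τ) ≤ b₁ then
        (∫ s in τ..t, QQ c S M s (x - c * (s - t)) y) + N0 3 (x + c * (t - τ)) y
      else
        (∫ s in (t - (b₁ - x) / c)..t, QQ c S M s (x - c * (s - t)) y) +
          B4 (t - (b₁ - x) / c) y]

/-- `ρ(|M|) = |M₁| + |M₂| + |M₃| + |M₄|`. -/
def rhoA (M : Fin 4 → ℝ → ℝ → ℝ → ℝ) (t x y : ℝ) : ℝ :=
  |M 0 t x y| + |M 1 t x y| + |M 2 t x y| + |M 3 t x y|

/-- `Q(|M|)`. -/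
def QQa (c S : ℝ) (M : Fin 4 → ℝ → ℝ → ℝ → ℝ) (t x y : ℝ) : ℝ :=
  2 * c * S * (|M 1 t x y| * |M 2 t x y| - |M 0 t x y| * |M 3 t x y|)

/-- `Q_i^σ(|M|) = σ ρ(|M|) |M_i| ± Q(|M|)`. -/
def Qsig (c S σ : ℝ) (i : Fin 4) (M : Fin 4 → ℝ → ℝ → ℝ → ℝ) (t x y : ℝ) : ℝ :=
  σ * rhoA M t x y * |M i t x y| + sgn4 i * QQa c S M t x y

/-- Duhamel formula with integrating factor along the `i`-th characteristic, starting at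
time `t0` with datum `datum`. -/
def duh (c S σ : ℝ) (i : Fin 4) (M : Fin 4 → ℝ → ℝ → ℝ → ℝ) (t0 t x y datum : ℝ) : ℝ :=
  ((∫ s in t0..t,
      Real.exp (σ * ∫ r in t0..s,
        rhoA M r (x + spX c i * (r - t)) (y + spY c i * (r - t))) *
        Qsig c S σ i M s (x + spX c i * (s - t)) (y + spY c i * (s - t))) + datum) *
    Real.exp (-(σ * ∫ s in t0..t, rhoA M s (x + spX c i * (s - t)) (y + spY c i * (s - t))))

/-- The operator `𝒯^σ`. -/
def Tsig (c S σ τ a₁ b₁ a₂ b₂ : ℝ) (N0 : Fin 4 → ℝ → ℝ → ℝ) (B1 B2 B3 B4 : ℝ → ℝ → ℝ)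
    (M : Fin 4 → ℝ → ℝ → ℝ → ℝ) : Fin 4 → ℝ → ℝ → ℝ → ℝ :=
  ![fun t x y =>
      if a₁ ≤ x - c * (t - τ) then duh c S σ 0 M τ t x y (N0 0 (x - c * (t - τ)) y)
      else duh c S σ 0 M (t - (x - a₁) / c) t x y (B1 (t - (x - a₁) / c) y),
    fun t x y =>
      if a₂ ≤ y - c * (t - τ) then duh c S σ 1 M τ t x y (N0 1 x (y - c * (t - τ)))
      else duh c S σ 1 M (t - (y - a₂) / c) t x y (B2 (t - (y - a₂) / c) x),
    fun t x y =>
      if y + c * (t - τ) ≤ b₂ then duh c S σ 2 M τ t x y (N0 2 x (y + c * (t - τ)))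
      else duh c S σ 2 M (t - (b₂ - y) / c) t x y (B3 (t - (b₂ - y) / c) x),
    fun t x y =>
      if x + c * (t - τ) ≤ b₁ then duh c S σ 3 M τ t x y (N0 3 (x + c * (t - τ)) y)
      else duh c S σ 3 M (t - (b₁ - x) / c) t x y (B4 (t - (b₁ - x) / c) y)]

/-- Complement of the four exceptional planes. -/
def offPlanes (c τ a₁ b₁ a₂ b₂ : ℝ) : Set (ℝ × ℝ × ℝ) :=
  {p | p.2.1 - c * (p.1 - τ) ≠ a₁ ∧ p.2.2 - c * (p.1 - τ) ≠ a₂ ∧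
    p.2.2 + c * (p.1 - τ) ≠ b₂ ∧ p.2.1 + c * (p.1 - τ) ≠ b₁}

/-- The interior of `𝒫` minus the four exceptional planes. -/
def Dset (c τ τ' a₁ b₁ a₂ b₂ : ℝ) : Set (ℝ × ℝ × ℝ) :=
  (Ioo τ τ' ×ˢ Ioo a₁ b₁ ×ˢ Ioo a₂ b₂) ∩ offPlanes c τ a₁ b₁ a₂ b₂

/-- `u` has first-order partial derivatives on `D`, continuous and bounded there. -/
def DerivReg (D : Set (ℝ × ℝ × ℝ)) (u : ℝ → ℝ → ℝ → ℝ) : Prop :=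
  (∀ p ∈ D, HasPartials u p) ∧
  Cont3 (pdtF u) D ∧ Cont3 (pdxF u) D ∧ Cont3 (pdyF u) D ∧
  ∃ C, ∀ p ∈ D, |pdtF u p.1 p.2.1 p.2.2| ≤ C ∧
    |pdxF u p.1 p.2.1 p.2.2| ≤ C ∧ |pdyF u p.1 p.2.1 p.2.2| ≤ C

/-- Membership in the space `E`: continuity on `𝒫` plus regularity of the first-order
partial derivatives off the four exceptional planes. -/
def memE (c τ τ' a₁ b₁ a₂ b₂ : ℝ) (u : ℝ → ℝ → ℝ → ℝ) : Prop :=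
  Cont3 u (PsetT (Icc τ τ') a₁ b₁ a₂ b₂) ∧ DerivReg (Dset c τ τ' a₁ b₁ a₂ b₂) u

/-- `‖u‖₁`: the max of the sup norm of `u` over `P` and of the sup norms of its
first-order partial derivatives over `D`. -/
def norm1E (P D : Set (ℝ × ℝ × ℝ)) (u : ℝ → ℝ → ℝ → ℝ) : ℝ :=
  max (supNorm3 P u)
    (max (supNorm3 D (pdtF u)) (max (supNorm3 D (pdxF u)) (supNorm3 D (pdyF u))))

/-- `𝒩(N) = max_i ‖N_i‖₁`. -/
def NN4 (P D : Set (ℝ × ℝ × ℝ)) (N : Fin 4 → ℝ → ℝ → ℝ → ℝ) : ℝ :=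
  max (max (norm1E P D (N 0)) (norm1E P D (N 1)))
    (max (norm1E P D (N 2)) (norm1E P D (N 3)))

/-- The convex set `𝓜_R = {N ∈ E⁴ : 𝒩(N) ≤ R}`. -/
def MR (c τ τ' a₁ b₁ a₂ b₂ R : ℝ) : Set (Fin 4 → ℝ → ℝ → ℝ → ℝ) :=
  {N | (∀ i, memE c τ τ' a₁ b₁ a₂ b₂ (N i)) ∧
    NN4 (PsetT (Icc τ τ') a₁ b₁ a₂ b₂) (Dset c τ τ' a₁ b₁ a₂ b₂) N ≤ R}

/-- The transported initial datum `N̄_i^τ`. -/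
def barN0 (c τ : ℝ) (N0 : Fin 4 → ℝ → ℝ → ℝ) (i : Fin 4) : ℝ → ℝ → ℝ → ℝ :=
  fun t x y => N0 i (x - spX c i * (t - τ)) (y - spY c i * (t - τ))

/-- The transported boundary data `N̄₁⁻, N̄₂⁻, N̄₃⁺, N̄₄⁺`. -/
def barB (c a₁ b₁ a₂ b₂ : ℝ) (B1 B2 B3 B4 : ℝ → ℝ → ℝ) : Fin 4 → ℝ → ℝ → ℝ → ℝ :=
  ![fun t x y => B1 (t - (x - a₁) / c) y,
    fun t x y => B2 (t - (y - a₂) / c) x,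
    fun t x y => B3 (t - (b₂ - y) / c) x,
    fun t x y => B4 (t - (b₁ - x) / c) y]

/-- Domain of definition of the transported initial datum `N̄_i^τ` inside `𝒫`. -/
def domBar0 (c τ a₁ b₁ a₂ b₂ : ℝ) (T : Set ℝ) (i : Fin 4) : Set (ℝ × ℝ × ℝ) :=
  PsetT T a₁ b₁ a₂ b₂ ∩
    {p | (p.2.1 - spX c i * (p.1 - τ), p.2.2 - spY c i * (p.1 - τ)) ∈ Rect2 a₁ b₁ a₂ b₂}

/-- Domains of definition of the transported boundary data inside `𝒫`. -/
def domBarB (c a₁ b₁ a₂ b₂ : ℝ) (T : Set ℝ) : Fin 4 → Set (ℝ × ℝ × ℝ) :=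
  ![PsetT T a₁ b₁ a₂ b₂ ∩ {p | p.1 - (p.2.1 - a₁) / c ∈ T},
    PsetT T a₁ b₁ a₂ b₂ ∩ {p | p.1 - (p.2.2 - a₂) / c ∈ T},
    PsetT T a₁ b₁ a₂ b₂ ∩ {p | p.1 - (b₂ - p.2.2) / c ∈ T},
    PsetT T a₁ b₁ a₂ b₂ ∩ {p | p.1 - (b₁ - p.2.1) / c ∈ T}]

/-- `‖N̄_i^τ‖₁`. -/
def nb0 (c τ a₁ b₁ a₂ b₂ : ℝ) (T : Set ℝ) (N0 : Fin 4 → ℝ → ℝ → ℝ) (i : Fin 4) : ℝ :=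
  norm1E (domBar0 c τ a₁ b₁ a₂ b₂ T i) (domBar0 c τ a₁ b₁ a₂ b₂ T i) (barN0 c τ N0 i)

/-- `‖N̄₁⁻‖₁`, `‖N̄₂⁻‖₁`, `‖N̄₃⁺‖₁`, `‖N̄₄⁺‖₁`. -/
def nbB (c a₁ b₁ a₂ b₂ : ℝ) (T : Set ℝ) (B1 B2 B3 B4 : ℝ → ℝ → ℝ) (i : Fin 4) : ℝ :=
  norm1E (domBarB c a₁ b₁ a₂ b₂ T i) (domBarB c a₁ b₁ a₂ b₂ T i)
    (barB c a₁ b₁ a₂ b₂ B1 B2 B3 B4 i)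

/-- `q`: the max of the `‖·‖₁` norms of the eight transported data functions. -/
def qval (c τ a₁ b₁ a₂ b₂ : ℝ) (T : Set ℝ) (N0 : Fin 4 → ℝ → ℝ → ℝ)
    (B1 B2 B3 B4 : ℝ → ℝ → ℝ) : ℝ :=
  max
    (max (max (nb0 c τ a₁ b₁ a₂ b₂ T N0 0) (nb0 c τ a₁ b₁ a₂ b₂ T N0 1))
      (max (nb0 c τ a₁ b₁ a₂ b₂ T N0 2) (nb0 c τ a₁ b₁ a₂ b₂ T N0 3)))
    (max (max (nbB c a₁ b₁ a₂ b₂ T B1 B2 B3 B4 0) (nbB c a₁ b₁ a₂ b₂ T B1 B2 B3 B4 1))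
      (max (nbB c a₁ b₁ a₂ b₂ T B1 B2 B3 B4 2) (nbB c a₁ b₁ a₂ b₂ T B1 B2 B3 B4 3)))

/-- `μ = 8 + 4/c + 8c`. -/
def muc (c : ℝ) : ℝ := 8 + 4 / c + 8 * c

/-- `λ = 16 + 16c`. -/
def lamc (c : ℝ) : ℝ := 16 + 16 * c

/-- `δ = 4/c + 8 + 4c`. -/
def delc (c : ℝ) : ℝ := 4 / c + 8 + 4 * c

/-- `γ = 1 + c + 1/c`. -/
def gamc (c : ℝ) : ℝ := 1 + c + 1 / c

/-- `p_σ = (μ + λ σ R₀ (τ'-τ))(σ + cS)`. -/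
def psig (c S σ R₀ τ τ' : ℝ) : ℝ := (muc c + lamc c * σ * R₀ * (τ' - τ)) * (σ + c * S)

/-- `q_σ = q (1 + δ σ R₀)`. -/
def qsig (c σ R₀ q : ℝ) : ℝ := q * (1 + delc c * σ * R₀)

/-- `max_i ‖N_i‖₁` for a solution: sup norms of the `N_i` over `Dom`, and of their
first-order partial derivatives over the interior of `Dom`. -/
def NNSol (Dom : Set (ℝ × ℝ × ℝ)) (N : Fin 4 → ℝ → ℝ → ℝ → ℝ) : ℝ :=
  NN4 Dom (interior Dom) N


lemma aux_exp_sub (a b B : ℝ) (ha : a ≤ B) (hb : b ≤ B) :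
    |Real.exp a - Real.exp b| ≤ Real.exp B * |a - b| := by
  wlog h : b ≤ a generalizing a b
  · rw [abs_sub_comm, abs_sub_comm a b]
    exact this b a hb ha (le_of_not_ge h)
  · rw [abs_of_nonneg (sub_nonneg.2 (Real.exp_le_exp.2 h)), abs_of_nonneg (sub_nonneg.2 h)]
    have h1 : 1 - (a - b) ≤ Real.exp (b - a) := by
      have := Real.add_one_le_exp (b - a); linarith
    have h2 : Real.exp b = Real.exp a * Real.exp (b - a) := by
      rw [← Real.exp_add]; congr 1; ring
    have h3 : Real.exp a * (1 - (a - b)) ≤ Real.exp b := by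
      rw [h2]; exact mul_le_mul_of_nonneg_left h1 (Real.exp_pos a).le
    have h4 : Real.exp a * (a - b) ≤ Real.exp B * (a - b) :=
      mul_le_mul_of_nonneg_right (Real.exp_le_exp.2 ha) (sub_nonneg.2 h)
    linarith

lemma aux_mul_sub (a b a' b' A B α β : ℝ) (ha : |a| ≤ A) (hb' : |b'| ≤ B)
    (h1 : |a - a'| ≤ α) (h2 : |b - b'| ≤ β) : |a * b - a' * b'| ≤ A * β + α * B := by
  have e : a * b - a' * b' = a * (b - b') + (a - a') * b' := by ring
  rw [e]
  refine (abs_add_le _ _).trans ?_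
  rw [abs_mul, abs_mul]
  have := abs_nonneg a
  have := abs_nonneg (a - a')
  have := abs_nonneg (b - b')
  have := abs_nonneg b'
  have : 0 ≤ A := (abs_nonneg a).trans ha
  have : 0 ≤ α := (abs_nonneg _).trans h1
  gcongr

lemma aux_int_bound (f : ℝ → ℝ) (u v L C : ℝ) (huv : u ≤ v) (hL : v - u ≤ L) (hC : 0 ≤ C)
    (hf : ∀ s ∈ Icc u v, |f s| ≤ C) : |∫ s in u..v, f s| ≤ C * L := by
  have := intervalIntegral.norm_integral_le_of_norm_le_const (a := u) (b := v) (f := f) (C := C)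
    (by
      intro s hs
      rw [uIoc_of_le huv] at hs
      exact hf s ⟨hs.1.le, hs.2⟩)
  rw [Real.norm_eq_abs, abs_of_nonneg (sub_nonneg.2 huv)] at this
  exact this.trans (mul_le_mul_of_nonneg_left hL hC)

lemma aux_int_sub (f g : ℝ → ℝ) (u v L C : ℝ) (huv : u ≤ v) (hL : v - u ≤ L) (hC : 0 ≤ C)
    (hfc : ContinuousOn f (Icc u v)) (hgc : ContinuousOn g (Icc u v))
    (hf : ∀ s ∈ Icc u v, |f s - g s| ≤ C) :
    |(∫ s in u..v, f s) - ∫ s in u..v, g s| ≤ C * L := by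
  rw [← intervalIntegral.integral_sub (hfc.intervalIntegrable_of_Icc huv)
    (hgc.intervalIntegrable_of_Icc huv)]
  exact aux_int_bound _ u v L C huv hL hC hf

lemma aux_prim (ρ : ℝ → ℝ) (u v : ℝ) (huv : u ≤ v) (h : ContinuousOn ρ (Icc u v)) :
    ContinuousOn (fun s => ∫ r in u..s, ρ r) (Icc u v) := by
  have := intervalIntegral.continuousOn_primitive_interval (μ := volume) (f := ρ) (a := u) (b := v)
    (by rw [uIcc_of_le huv]; exact h.integrableOn_Icc)
  rwa [uIcc_of_le huv] at this

/-- One dimensional Duhamel estimate. -/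
lemma aux_duh (ρ ρ' q q' : ℝ → ℝ) (σ u v L K₁ K₂ D δ d : ℝ) (hσ : 0 < σ)
    (huv : u ≤ v) (hL : v - u ≤ L)
    (hK₁ : 0 ≤ K₁) (hK₂ : 0 ≤ K₂) (hδ : 0 ≤ δ) (hd : |d| ≤ D)
    (cρ : ContinuousOn ρ (Icc u v)) (cρ' : ContinuousOn ρ' (Icc u v))
    (cq : ContinuousOn q (Icc u v)) (cq' : ContinuousOn q' (Icc u v))
    (bρ : ∀ s ∈ Icc u v, |ρ s| ≤ K₁) (bρ' : ∀ s ∈ Icc u v, |ρ' s| ≤ K₁)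
    (bq : ∀ s ∈ Icc u v, |q s| ≤ K₂) (bq' : ∀ s ∈ Icc u v, |q' s| ≤ K₂)
    (hρ : ∀ s ∈ Icc u v, |ρ s - ρ' s| ≤ δ) (hq : ∀ s ∈ Icc u v, |q s - q' s| ≤ δ) :
    |((∫ s in u..v, Real.exp (σ * ∫ r in u..s, ρ r) * q s) + d) *
        Real.exp (-(σ * ∫ s in u..v, ρ s)) -
      ((∫ s in u..v, Real.exp (σ * ∫ r in u..s, ρ' r) * q' s) + d) *
        Real.exp (-(σ * ∫ s in u..v, ρ' s))| ≤
      ((Real.exp (σ * (K₁ * L)) * K₂ * L + D) * (Real.exp (σ * (K₁ * L)) * (σ * L)) +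
        (Real.exp (σ * (K₁ * L)) + Real.exp (σ * (K₁ * L)) * (σ * L) * K₂) * L *
          Real.exp (σ * (K₁ * L))) * δ := by
  set E := Real.exp (σ * (K₁ * L)) with hE
  have hE0 : 0 < E := Real.exp_pos _
  have hL0 : 0 ≤ L := by linarith
  have bI : ∀ f : ℝ → ℝ, (∀ s ∈ Icc u v, |f s| ≤ K₁) → ∀ s ∈ Icc u v,
      |∫ r in u..s, f r| ≤ K₁ * L := by
    intro f hf s hs
    exact aux_int_bound f u s L K₁ hs.1 (by linarith [hs.2]) hK₁
      (fun r hr => hf r ⟨hr.1, hr.2.trans hs.2⟩)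
  have dI : ∀ s ∈ Icc u v, |(∫ r in u..s, ρ r) - ∫ r in u..s, ρ' r| ≤ δ * L := by
    intro s hs
    have hsub : Icc u s ⊆ Icc u v := Icc_subset_Icc_right hs.2
    exact aux_int_sub ρ ρ' u s L δ hs.1 (by linarith [hs.2]) hδ (cρ.mono hsub) (cρ'.mono hsub)
      (fun r hr => hρ r (hsub hr))
  have bE : ∀ f : ℝ → ℝ, (∀ s ∈ Icc u v, |f s| ≤ K₁) → ∀ s ∈ Icc u v,
      |Real.exp (σ * ∫ r in u..s, f r)| ≤ E := by
    intro f hf s hs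
    rw [abs_of_pos (Real.exp_pos _)]
    exact Real.exp_le_exp.2 (mul_le_mul_of_nonneg_left ((le_abs_self _).trans (bI f hf s hs)) hσ.le)
  have dE : ∀ s ∈ Icc u v, |Real.exp (σ * ∫ r in u..s, ρ r) - Real.exp (σ * ∫ r in u..s, ρ' r)|
      ≤ E * (σ * L) * δ := by
    intro s hs
    refine (aux_exp_sub _ _ (σ * (K₁ * L))
      (mul_le_mul_of_nonneg_left ((le_abs_self _).trans (bI ρ bρ s hs)) hσ.le)
      (mul_le_mul_of_nonneg_left ((le_abs_self _).trans (bI ρ' bρ' s hs)) hσ.le)).trans ?_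
    rw [← mul_sub, abs_mul, abs_of_pos hσ]
    have := mul_le_mul_of_nonneg_left (dI s hs) (mul_pos hE0 hσ).le
    nlinarith [this]
  have cE : ∀ f : ℝ → ℝ, ContinuousOn f (Icc u v) →
      ContinuousOn (fun s => Real.exp (σ * ∫ r in u..s, f r)) (Icc u v) := by
    intro f hf
    exact ((aux_prim f u v huv hf).const_smul σ).rexp
  have hv : v ∈ Icc u v := ⟨huv, le_rfl⟩
  have hA : |(∫ s in u..v, Real.exp (σ * ∫ r in u..s, ρ r) * q s) -
      ∫ s in u..v, Real.exp (σ * ∫ r in u..s, ρ' r) * q' s| ≤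
      (E * δ + E * (σ * L) * δ * K₂) * L := by
    refine aux_int_sub _ _ u v L _ huv hL (by positivity) ((cE ρ cρ).mul cq)
      ((cE ρ' cρ').mul cq') ?_
    intro s hs
    exact aux_mul_sub _ _ _ _ _ _ _ _ (bE ρ bρ s hs) (bq' s hs) (dE s hs) (hq s hs)
  have hB : |(∫ s in u..v, Real.exp (σ * ∫ r in u..s, ρ r) * q s)| ≤ E * K₂ * L := by
    refine aux_int_bound _ u v L _ huv hL (by positivity) ?_
    intro s hs
    rw [abs_mul]
    exact mul_le_mul (bE ρ bρ s hs) (bq s hs) (abs_nonneg _) hE0.le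
  have hB' : |(∫ s in u..v, Real.exp (σ * ∫ r in u..s, ρ r) * q s) + d| ≤ E * K₂ * L + D :=
    (abs_add_le _ _).trans (add_le_add hB hd)
  have hn : ∀ f : ℝ → ℝ, (∀ s ∈ Icc u v, |f s| ≤ K₁) →
      -(σ * ∫ s in u..v, f s) ≤ σ * (K₁ * L) := by
    intro f hf
    rw [← mul_neg]
    exact mul_le_mul_of_nonneg_left ((neg_le_abs _).trans (bI f hf v hv)) hσ.le
  have hF : |Real.exp (-(σ * ∫ s in u..v, ρ s)) - Real.exp (-(σ * ∫ s in u..v, ρ' s))| ≤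
      E * (σ * L) * δ := by
    refine (aux_exp_sub _ _ (σ * (K₁ * L)) (hn ρ bρ) (hn ρ' bρ')).trans ?_
    have e : -(σ * ∫ s in u..v, ρ s) - -(σ * ∫ s in u..v, ρ' s) =
      -(σ * ((∫ s in u..v, ρ s) - ∫ s in u..v, ρ' s)) := by ring
    rw [e, abs_neg, abs_mul, abs_of_pos hσ]
    have := mul_le_mul_of_nonneg_left (dI v hv) (mul_pos hE0 hσ).le
    nlinarith [this]
  have hG : |Real.exp (-(σ * ∫ s in u..v, ρ' s))| ≤ E := by
    rw [abs_of_pos (Real.exp_pos _)]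
    exact Real.exp_le_exp.2 (hn ρ' bρ')
  have hfin := aux_mul_sub _ _
    ((∫ s in u..v, Real.exp (σ * ∫ r in u..s, ρ' r) * q' s) + d) _ _ _ ((E * δ + E * (σ * L) * δ * K₂) * L) _ hB' hG
    (by rw [add_sub_add_right_eq_sub]; exact hA) hF
  refine hfin.trans (le_of_eq ?_)
  ring

lemma aux_sgn (i : Fin 4) : |sgn4 i| = 1 := by
  fin_cases i <;> simp [sgn4]

lemma aux_abs_abs_sub {a b η : ℝ} (h : |a - b| ≤ η) : |(|a| - |b|)| ≤ η :=
  (abs_abs_sub_abs_le a b).trans h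

lemma aux_rho_bd (M : Fin 4 → ℝ → ℝ → ℝ → ℝ) (t x y K : ℝ) (h : ∀ i, |M i t x y| ≤ K) :
    |rhoA M t x y| ≤ 4 * K := by
  unfold rhoA
  rw [abs_of_nonneg (by positivity)]
  linarith [h 0, h 1, h 2, h 3]

lemma aux_rho_sub (M N : Fin 4 → ℝ → ℝ → ℝ → ℝ) (t x y η : ℝ)
    (h : ∀ i, |M i t x y - N i t x y| ≤ η) :
    |rhoA M t x y - rhoA N t x y| ≤ 4 * η := by
  have h0 := abs_le.1 (aux_abs_abs_sub (h 0))
  have h1 := abs_le.1 (aux_abs_abs_sub (h 1))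
  have h2 := abs_le.1 (aux_abs_abs_sub (h 2))
  have h3 := abs_le.1 (aux_abs_abs_sub (h 3))
  unfold rhoA
  rw [abs_le]
  constructor <;> linarith [h0.1, h0.2, h1.1, h1.2, h2.1, h2.2, h3.1, h3.2]

lemma aux_Q_bd (c S σ : ℝ) (hc : 0 < c) (hS : 0 < S) (hσ : 0 < σ) (i : Fin 4)
    (M : Fin 4 → ℝ → ℝ → ℝ → ℝ) (t x y K : ℝ) (h : ∀ i, |M i t x y| ≤ K) :
    |Qsig c S σ i M t x y| ≤ σ * (4 * K) * K + 2 * c * S * (K * K + K * K) := by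
  have hK : 0 ≤ K := (abs_nonneg _).trans (h 0)
  unfold Qsig
  refine (abs_add_le _ _).trans (add_le_add ?_ ?_)
  · rw [abs_mul, abs_mul, abs_of_pos hσ, abs_abs]
    have := aux_rho_bd M t x y K h
    have := h i
    gcongr
  · rw [abs_mul, aux_sgn, one_mul]
    unfold QQa
    rw [abs_mul, abs_of_pos (by positivity : (0:ℝ) < 2 * c * S)]
    refine mul_le_mul_of_nonneg_left ?_ (by positivity)
    refine (abs_sub _ _).trans (add_le_add ?_ ?_)
    · rw [abs_mul, abs_abs, abs_abs]
      exact mul_le_mul (h 1) (h 2) (abs_nonneg _) hK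
    · rw [abs_mul, abs_abs, abs_abs]
      exact mul_le_mul (h 0) (h 3) (abs_nonneg _) hK

lemma aux_Q_sub (c S σ : ℝ) (hc : 0 < c) (hS : 0 < S) (hσ : 0 < σ) (i : Fin 4)
    (M N : Fin 4 → ℝ → ℝ → ℝ → ℝ) (t x y K η : ℝ)
    (hM : ∀ i, |M i t x y| ≤ K) (hN : ∀ i, |N i t x y| ≤ K)
    (h : ∀ i, |M i t x y - N i t x y| ≤ η) :
    |Qsig c S σ i M t x y - Qsig c S σ i N t x y| ≤
      (8 * σ * K + 8 * c * S * K) * η := by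
  have e : Qsig c S σ i M t x y - Qsig c S σ i N t x y =
      σ * (rhoA M t x y * |M i t x y| - rhoA N t x y * |N i t x y|) +
      sgn4 i * (2 * c * S * ((|M 1 t x y| * |M 2 t x y| - |N 1 t x y| * |N 2 t x y|) -
        (|M 0 t x y| * |M 3 t x y| - |N 0 t x y| * |N 3 t x y|))) := by
    unfold Qsig QQa; ring
  have h1 := aux_mul_sub _ _ _ _ _ K _ _ (aux_rho_bd M t x y K hM)
    (by rw [abs_abs]; exact hN i) (aux_rho_sub M N t x y η h) (aux_abs_abs_sub (h i))
  have h2 := aux_mul_sub _ _ _ _ K K _ _ (by rw [abs_abs]; exact hM 1)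
    (by rw [abs_abs]; exact hN 2) (aux_abs_abs_sub (h 1)) (aux_abs_abs_sub (h 2))
  have h3 := aux_mul_sub _ _ _ _ K K _ _ (by rw [abs_abs]; exact hM 0)
    (by rw [abs_abs]; exact hN 3) (aux_abs_abs_sub (h 0)) (aux_abs_abs_sub (h 3))
  rw [e]
  refine (abs_add_le _ _).trans ?_
  rw [abs_mul, abs_of_pos hσ, abs_mul, aux_sgn, one_mul, abs_mul,
    abs_of_pos (by positivity : (0:ℝ) < 2 * c * S)]
  have h4 := mul_le_mul_of_nonneg_left h1 hσ.le
  have h5 := mul_le_mul_of_nonneg_left ((abs_sub _ _).trans (add_le_add h2 h3))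
    (by positivity : (0:ℝ) ≤ 2 * c * S)
  refine (add_le_add h4 h5).trans (le_of_eq ?_)
  ring

/-- The constant in the local Lipschitz estimate. -/
def auxC (c S σ L K D : ℝ) : ℝ :=
  ((Real.exp (σ * (4 * K * L)) * (σ * (4 * K) * K + 2 * c * S * (K * K + K * K)) * L + D) *
      (Real.exp (σ * (4 * K * L)) * (σ * L)) +
    (Real.exp (σ * (4 * K * L)) + Real.exp (σ * (4 * K * L)) * (σ * L) *
      (σ * (4 * K) * K + 2 * c * S * (K * K + K * K))) * L *
      Real.exp (σ * (4 * K * L))) * (4 + (8 * σ * K + 8 * c * S * K))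

lemma aux_duh_sub (c S σ : ℝ) (hc : 0 < c) (hS : 0 < S) (hσ : 0 < σ) (i : Fin 4)
    (P : Set (ℝ × ℝ × ℝ))
    (M N : Fin 4 → ℝ → ℝ → ℝ → ℝ) (K η L D t0 t x y d : ℝ)
    (cM : ∀ i, Cont3 (M i) P) (cN : ∀ i, Cont3 (N i) P)
    (hM : ∀ i, ∀ p ∈ P, |M i p.1 p.2.1 p.2.2| ≤ K) (hN : ∀ i, ∀ p ∈ P, |N i p.1 p.2.1 p.2.2| ≤ K)
    (h : ∀ i, ∀ p ∈ P, |M i p.1 p.2.1 p.2.2 - N i p.1 p.2.1 p.2.2| ≤ η)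
    (hη : 0 ≤ η) (hK : 0 ≤ K) (ht : t0 ≤ t) (hL : t - t0 ≤ L) (hd : |d| ≤ D)
    (hP : ∀ s ∈ Icc t0 t, (s, x + spX c i * (s - t), y + spY c i * (s - t)) ∈ P) :
    |duh c S σ i M t0 t x y d - duh c S σ i N t0 t x y d| ≤ auxC c S σ L K D * η := by
  have cc : ∀ M : Fin 4 → ℝ → ℝ → ℝ → ℝ, (∀ i, Cont3 (M i) P) → ∀ j, ContinuousOn
      (fun s => M j s (x + spX c i * (s - t)) (y + spY c i * (s - t))) (Icc t0 t) := by
    intro M cM j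
    have hcont : Continuous
        (fun s : ℝ => (s, x + spX c i * (s - t), y + spY c i * (s - t))) := by fun_prop
    exact ContinuousOn.comp (cM j) hcont.continuousOn hP
  have cρ : ∀ M : Fin 4 → ℝ → ℝ → ℝ → ℝ, (∀ i, Cont3 (M i) P) → ContinuousOn
      (fun s => rhoA M s (x + spX c i * (s - t)) (y + spY c i * (s - t))) (Icc t0 t) := by
    intro M cM
    exact ((((cc M cM 0).abs).add (cc M cM 1).abs).add (cc M cM 2).abs).add (cc M cM 3).abs
  have cq : ∀ M : Fin 4 → ℝ → ℝ → ℝ → ℝ, (∀ i, Cont3 (M i) P) → ContinuousOn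
      (fun s => Qsig c S σ i M s (x + spX c i * (s - t)) (y + spY c i * (s - t))) (Icc t0 t) := by
    intro M cM
    unfold Qsig QQa
    exact ((continuousOn_const.mul (cρ M cM)).mul (cc M cM i).abs).add
      (continuousOn_const.mul (continuousOn_const.mul
        (((cc M cM 1).abs.mul (cc M cM 2).abs).sub ((cc M cM 0).abs.mul (cc M cM 3).abs))))
  have key := aux_duh _ _ _ _ σ t0 t L (4 * K)
    (σ * (4 * K) * K + 2 * c * S * (K * K + K * K)) D
    ((4 + (8 * σ * K + 8 * c * S * K)) * η) d hσ ht hL (by positivity) (by positivity)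
    (by positivity) hd (cρ M cM) (cρ N cN) (cq M cM) (cq N cN)
    (fun s hs => aux_rho_bd M _ _ _ K (fun j => hM j _ (hP s hs)))
    (fun s hs => aux_rho_bd N _ _ _ K (fun j => hN j _ (hP s hs)))
    (fun s hs => aux_Q_bd c S σ hc hS hσ i M _ _ _ K (fun j => hM j _ (hP s hs)))
    (fun s hs => aux_Q_bd c S σ hc hS hσ i N _ _ _ K (fun j => hN j _ (hP s hs)))
    (fun s hs => (aux_rho_sub M N _ _ _ η (fun j => h j _ (hP s hs))).trans (by
      have : 0 ≤ (8 * σ * K + 8 * c * S * K) * η := by positivity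
      linarith))
    (fun s hs => (aux_Q_sub c S σ hc hS hσ i M N _ _ _ K η (fun j => hM j _ (hP s hs))
      (fun j => hN j _ (hP s hs)) (fun j => h j _ (hP s hs))).trans (by linarith))
  unfold duh
  refine key.trans (le_of_eq ?_)
  unfold auxC
  ring

lemma aux_sup (P : Set (ℝ × ℝ × ℝ)) (hP : IsCompact P) (f : ℝ → ℝ → ℝ → ℝ) (hf : Cont3 f P) :
    ∀ p ∈ P, |f p.1 p.2.1 p.2.2| ≤ supNorm3 P f := by
  intro p hp
  exact le_csSup (hP.bddAbove_image hf.abs) ⟨p, hp, rfl⟩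

lemma aux_norm4 (P : Set (ℝ × ℝ × ℝ)) (M : Fin 4 → ℝ → ℝ → ℝ → ℝ) (i : Fin 4) :
    supNorm3 P (M i) ≤ norm4 P M := by
  unfold norm4
  fin_cases i <;> simp

lemma aux_norm4_le (P : Set (ℝ × ℝ × ℝ)) (M : Fin 4 → ℝ → ℝ → ℝ → ℝ) (ε : ℝ) (hε : 0 ≤ ε)
    (h : ∀ i, ∀ p ∈ P, |M i p.1 p.2.1 p.2.2| ≤ ε) : norm4 P M ≤ ε := by
  have : ∀ i, supNorm3 P (M i) ≤ ε := by
    intro i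
    refine Real.sSup_le ?_ hε
    rintro _ ⟨p, hp, rfl⟩
    exact h i p hp
  exact max_le (max_le (this 0) (this 1)) (max_le (this 2) (this 3))

lemma aux_smooth (D : Set (ℝ × ℝ)) (f : ℝ → ℝ → ℝ) (h : Smooth2 D f) :
    ∃ C, 0 ≤ C ∧ ∀ a b, (a, b) ∈ D → |f a b| ≤ C := by
  obtain ⟨-, -, -, -, C, hC⟩ := h
  exact ⟨|C|, abs_nonneg C, fun a b hab => ((hC _ hab).1).trans (le_abs_self C)⟩

/-- Continuity of the operator `𝒯^σ` on `C(𝒫;ℝ)⁴` for the sup norm, for every `σ > 0`. -/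
theorem Tsig_continuous
    (c S τ τ' a₁ b₁ a₂ b₂ : ℝ) (hc : 0 < c) (hS : 0 < S)
    (hτ : τ < τ') (ha : a₁ < b₁) (hb : a₂ < b₂)
    (N0 : Fin 4 → ℝ → ℝ → ℝ) (B1 B2 B3 B4 : ℝ → ℝ → ℝ)
    (hdata : NiceData (Icc τ τ') τ a₁ b₁ a₂ b₂ N0 B1 B2 B3 B4) :
    ∀ σ : ℝ, 0 < σ →
      ∀ N : Fin 4 → ℝ → ℝ → ℝ → ℝ, (∀ i, Cont3 (N i) (PsetT (Icc τ τ') a₁ b₁ a₂ b₂)) →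
        ∀ ε > 0, ∃ η > 0, ∀ M : Fin 4 → ℝ → ℝ → ℝ → ℝ,
          (∀ i, Cont3 (M i) (PsetT (Icc τ τ') a₁ b₁ a₂ b₂)) →
          norm4 (PsetT (Icc τ τ') a₁ b₁ a₂ b₂) (fun i t x y => M i t x y - N i t x y) ≤ η →
          norm4 (PsetT (Icc τ τ') a₁ b₁ a₂ b₂)
            (fun i t x y => Tsig c S σ τ a₁ b₁ a₂ b₂ N0 B1 B2 B3 B4 M i t x y - Tsig c S σ τ a₁ b₁ a₂ b₂ N0 B1 B2 B3 B4 N i t x y) ≤ ε := by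
  intro σ hσ N cN ε hε
  obtain ⟨h0, ⟨hB1, -⟩, ⟨hB2, -⟩, ⟨hB3, -⟩, ⟨hB4, -⟩, -⟩ := hdata
  choose D0 hD0 bD0 using fun i => aux_smooth _ _ (h0 i).1
  obtain ⟨D1, hD1, bD1⟩ := aux_smooth _ _ hB1
  obtain ⟨D2, hD2, bD2⟩ := aux_smooth _ _ hB2
  obtain ⟨D3, hD3, bD3⟩ := aux_smooth _ _ hB3
  obtain ⟨D4, hD4, bD4⟩ := aux_smooth _ _ hB4
  have p0 := hD0 0
  have p1 := hD0 1
  have p2 := hD0 2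
  have p3 := hD0 3
  obtain ⟨D, hD⟩ : ∃ D, D = D0 0 + D0 1 + D0 2 + D0 3 + D1 + D2 + D3 + D4 := ⟨_, rfl⟩
  have hDn : 0 ≤ D := by rw [hD]; positivity
  set P := PsetT (Icc τ τ') a₁ b₁ a₂ b₂ with hPdef
  have hPc : IsCompact P := isCompact_Icc.prod (isCompact_Icc.prod isCompact_Icc)
  have hbN : ∀ i, ∀ p ∈ P, |N i p.1 p.2.1 p.2.2| ≤ norm4 P N :=
    fun i p hp => (aux_sup P hPc (N i) (cN i) p hp).trans (aux_norm4 P N i)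
  have hNn : 0 ≤ norm4 P N := (abs_nonneg _).trans
    (hbN 0 (τ, a₁, a₂) ⟨⟨le_rfl, hτ.le⟩, ⟨le_rfl, ha.le⟩, ⟨le_rfl, hb.le⟩⟩)
  obtain ⟨K, hK⟩ : ∃ K, K = norm4 P N + 1 := ⟨_, rfl⟩
  have hK0 : 0 ≤ K := by linarith
  have hL0 : 0 < τ' - τ := by linarith
  have hC0 : 0 ≤ auxC c S σ (τ' - τ) K D := by
    unfold auxC
    positivity
  obtain ⟨C, hC⟩ : ∃ C, C = auxC c S σ (τ' - τ) K D := ⟨_, rfl⟩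
  rw [← hC] at hC0
  refine ⟨min 1 (ε / (C + 1)), by positivity, ?_⟩
  intro M cM hMN
  obtain ⟨η, hη⟩ : ∃ η, η = min 1 (ε / (C + 1)) := ⟨_, rfl⟩
  rw [← hη] at hMN
  have hη0 : 0 ≤ η := by rw [hη]; positivity
  have hη1 : η ≤ 1 := by rw [hη]; exact min_le_left _ _
  have hηε : C * η ≤ ε := by
    have h1 : η ≤ ε / (C + 1) := by rw [hη]; exact min_le_right _ _
    have h2 : η * (C + 1) ≤ ε := (le_div_iff₀ (by linarith)).1 h1
    nlinarith
  have hd : ∀ i, ∀ p ∈ P, |M i p.1 p.2.1 p.2.2 - N i p.1 p.2.1 p.2.2| ≤ η := fun i p hp =>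
    ((aux_sup P hPc (fun t x y => M i t x y - N i t x y) ((cM i).sub (cN i)) p hp).trans
      (aux_norm4 P (fun i t x y => M i t x y - N i t x y) i)).trans hMN
  have bN : ∀ i, ∀ p ∈ P, |N i p.1 p.2.1 p.2.2| ≤ K := fun i p hp =>
    (hbN i p hp).trans (by linarith)
  have bM : ∀ i, ∀ p ∈ P, |M i p.1 p.2.1 p.2.2| ≤ K := by
    intro i p hp
    have h1 := hbN i p hp
    have h2 := hd i p hp
    have h3 := abs_add_le (M i p.1 p.2.1 p.2.2 - N i p.1 p.2.1 p.2.2) (N i p.1 p.2.1 p.2.2)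
    rw [sub_add_cancel] at h3
    linarith
  have key : ∀ i t0 t x y d, t0 ≤ t → t - t0 ≤ τ' - τ → |d| ≤ D →
      (∀ s ∈ Icc t0 t, (s, x + spX c i * (s - t), y + spY c i * (s - t)) ∈ P) →
      |duh c S σ i M t0 t x y d - duh c S σ i N t0 t x y d| ≤ ε := by
    intro i t0 t x y d h1 h2 h3 h4
    refine (aux_duh_sub c S σ hc hS hσ i P M N K η (τ' - τ) D t0 t x y d cM cN bM bN hd hη0 hK0
      h1 h2 h3 h4).trans ?_
    rw [← hC]; exact hηε
  refine aux_norm4_le P _ ε hε.le ?_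
  rintro i ⟨t, x, y⟩ ⟨⟨ht1, ht2⟩, ⟨hx1, hx2⟩, ⟨hy1, hy2⟩⟩
  simp only at ht1 ht2 hx1 hx2 hy1 hy2
  -- elementary facts on the entry time
  have hent : ∀ z : ℝ, 0 ≤ z → z < c * (t - τ) →
      τ ≤ t - z / c ∧ t - z / c ≤ t ∧ c * (t - (t - z / c)) = z := by
    intro z hz hzl
    have h1 : z / c ≤ t - τ := by rw [div_le_iff₀ hc]; linarith
    have h2 : 0 ≤ z / c := by positivity
    refine ⟨by linarith, by linarith, ?_⟩
    field_simp
    ring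
  have hct : 0 ≤ c * (t - τ) := mul_nonneg hc.le (by linarith)
  have hmem : ∀ i t0, τ ≤ t0 → 
      (∀ w, 0 ≤ w → w ≤ c * (t - t0) → (x - spX 1 i * w ∈ Icc a₁ b₁ ∧ y - spY 1 i * w ∈ Icc a₂ b₂)) →
      ∀ s ∈ Icc t0 t, (s, x + spX c i * (s - t), y + spY c i * (s - t)) ∈ P := by
    intro i t0 h1 h2 s hs
    have hw1 : 0 ≤ c * (t - s) := mul_nonneg hc.le (by linarith [hs.2])
    have hw2 : c * (t - s) ≤ c * (t - t0) := mul_le_mul_of_nonneg_left (by linarith [hs.1]) hc.le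
    have e1 : x + spX c i * (s - t) = x - spX 1 i * (c * (t - s)) := by
      fin_cases i <;> simp [spX] <;> ring
    have e2 : y + spY c i * (s - t) = y - spY 1 i * (c * (t - s)) := by
      fin_cases i <;> simp [spY] <;> ring
    rw [e1, e2]
    exact ⟨⟨h1.trans hs.1, hs.2.trans ht2⟩, (h2 _ hw1 hw2).1, (h2 _ hw1 hw2).2⟩
  fin_cases i
  · change |(if a₁ ≤ x - c * (t - τ) then duh c S σ 0 M τ t x y (N0 0 (x - c * (t - τ)) y)
      else duh c S σ 0 M (t - (x - a₁) / c) t x y (B1 (t - (x - a₁) / c) y)) -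
      (if a₁ ≤ x - c * (t - τ) then duh c S σ 0 N τ t x y (N0 0 (x - c * (t - τ)) y)
      else duh c S σ 0 N (t - (x - a₁) / c) t x y (B1 (t - (x - a₁) / c) y))| ≤ ε
    split_ifs with hif
    · refine key _ _ _ _ _ _ ht1 (by linarith) ((bD0 0 _ _ ⟨⟨hif, by linarith⟩, hy1, hy2⟩).trans (by linarith))
        (hmem 0 _ le_rfl ?_)
      intro w hw hw'
      simp [spX, spY]
      refine ⟨⟨?_, ?_⟩, ?_, ?_⟩ <;> linarith
    · obtain ⟨e1, e2, e3⟩ := hent (x - a₁) (by linarith) (by linarith)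
      refine key _ _ _ _ _ _ e2 (by linarith) ((bD1 _ _ ⟨⟨e1, by linarith⟩, hy1, hy2⟩).trans (by linarith))
        (hmem 0 _ e1 ?_)
      intro w hw hw'
      rw [e3] at hw'
      simp [spX, spY]
      refine ⟨⟨?_, ?_⟩, ?_, ?_⟩ <;> linarith
  · change |(if a₂ ≤ y - c * (t - τ) then duh c S σ 1 M τ t x y (N0 1 x (y - c * (t - τ)))
      else duh c S σ 1 M (t - (y - a₂) / c) t x y (B2 (t - (y - a₂) / c) x)) -
      (if a₂ ≤ y - c * (t - τ) then duh c S σ 1 N τ t x y (N0 1 x (y - c * (t - τ)))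
      else duh c S σ 1 N (t - (y - a₂) / c) t x y (B2 (t - (y - a₂) / c) x))| ≤ ε
    split_ifs with hif
    · refine key _ _ _ _ _ _ ht1 (by linarith) ((bD0 1 _ _ ⟨⟨hx1, hx2⟩, hif, by simp only; linarith⟩).trans (by linarith))
        (hmem 1 _ le_rfl ?_)
      intro w hw hw'
      simp [spX, spY]
      refine ⟨⟨?_, ?_⟩, ?_, ?_⟩ <;> linarith
    · obtain ⟨e1, e2, e3⟩ := hent (y - a₂) (by linarith) (by linarith)
      refine key _ _ _ _ _ _ e2 (by linarith) ((bD2 _ _ ⟨⟨e1, by linarith⟩, hx1, hx2⟩).trans (by linarith))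
        (hmem 1 _ e1 ?_)
      intro w hw hw'
      rw [e3] at hw'
      simp [spX, spY]
      refine ⟨⟨?_, ?_⟩, ?_, ?_⟩ <;> linarith
  · change |(if y + c * (t - τ) ≤ b₂ then duh c S σ 2 M τ t x y (N0 2 x (y + c * (t - τ)))
      else duh c S σ 2 M (t - (b₂ - y) / c) t x y (B3 (t - (b₂ - y) / c) x)) -
      (if y + c * (t - τ) ≤ b₂ then duh c S σ 2 N τ t x y (N0 2 x (y + c * (t - τ)))
      else duh c S σ 2 N (t - (b₂ - y) / c) t x y (B3 (t - (b₂ - y) / c) x))| ≤ ε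
    split_ifs with hif
    · refine key _ _ _ _ _ _ ht1 (by linarith) ((bD0 2 _ _ ⟨⟨hx1, hx2⟩, by simp only; linarith, hif⟩).trans (by linarith))
        (hmem 2 _ le_rfl ?_)
      intro w hw hw'
      simp [spX, spY]
      refine ⟨⟨?_, ?_⟩, ?_, ?_⟩ <;> linarith
    · obtain ⟨e1, e2, e3⟩ := hent (b₂ - y) (by linarith) (by linarith)
      refine key _ _ _ _ _ _ e2 (by linarith) ((bD3 _ _ ⟨⟨e1, by linarith⟩, hx1, hx2⟩).trans (by linarith))
        (hmem 2 _ e1 ?_)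
      intro w hw hw'
      rw [e3] at hw'
      simp [spX, spY]
      refine ⟨⟨?_, ?_⟩, ?_, ?_⟩ <;> linarith
  · change |(if x + c * (t - τ) ≤ b₁ then duh c S σ 3 M τ t x y (N0 3 (x + c * (t - τ)) y)
      else duh c S σ 3 M (t - (b₁ - x) / c) t x y (B4 (t - (b₁ - x) / c) y)) -
      (if x + c * (t - τ) ≤ b₁ then duh c S σ 3 N τ t x y (N0 3 (x + c * (t - τ)) y)
      else duh c S σ 3 N (t - (b₁ - x) / c) t x y (B4 (t - (b₁ - x) / c) y))| ≤ ε
    split_ifs with hif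
    · refine key _ _ _ _ _ _ ht1 (by linarith) ((bD0 3 _ _ ⟨⟨by simp only; linarith, hif⟩, hy1, hy2⟩).trans (by linarith))
        (hmem 3 _ le_rfl ?_)
      intro w hw hw'
      simp [spX, spY]
      refine ⟨⟨?_, ?_⟩, ?_, ?_⟩ <;> linarith
    · obtain ⟨e1, e2, e3⟩ := hent (b₁ - x) (by linarith) (by linarith)
      refine key _ _ _ _ _ _ e2 (by linarith) ((bD4 _ _ ⟨⟨e1, by linarith⟩, hy1, hy2⟩).trans (by linarith))
        (hmem 3 _ e1 ?_)
      intro w hw hw'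
      rw [e3] at hw'
      simp [spX, spY]
      refine ⟨⟨?_, ?_⟩, ?_, ?_⟩ <;> linarith


end
end

section
/- For all M, N ∈ C(𝒫;ℝ)⁴, ‖𝒯(M) − 𝒯(N)‖ ≤ (τ'−τ)·4cS·(‖M‖ + ‖N‖)·‖M − N‖, where ‖P‖ = max_{1≤i≤4} ‖P_i‖∞. -/
open Set MeasureTheory

noncomputable section

theorem le_norm4_aux {T : Set ℝ} (hT : IsCompact T) {a₁ b₁ a₂ b₂ : ℝ}
    {M : Fin 4 → ℝ → ℝ → ℝ → ℝ} (hM : ∀ i, Cont3 (M i) (PsetT T a₁ b₁ a₂ b₂))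
    (i : Fin 4) {t x y : ℝ} (h : (t, x, y) ∈ PsetT T a₁ b₁ a₂ b₂) :
    |M i t x y| ≤ norm4 (PsetT T a₁ b₁ a₂ b₂) M := by
  have hP : IsCompact (PsetT T a₁ b₁ a₂ b₂) := hT.prod (isCompact_Icc.prod isCompact_Icc)
  have h1 : |M i t x y| ≤ supNorm3 (PsetT T a₁ b₁ a₂ b₂) (M i) :=
    le_csSup (hP.bddAbove_image (hM i).abs) ⟨(t, x, y), h, rfl⟩
  refine h1.trans ?_
  unfold norm4
  fin_cases i <;> simp

theorem QQ_diff_aux {c S m n d : ℝ} (hc : 0 < c) (hS : 0 < S)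
    {M N : Fin 4 → ℝ → ℝ → ℝ → ℝ} {t x y : ℝ}
    (hM : ∀ i, |M i t x y| ≤ m) (hN : ∀ i, |N i t x y| ≤ n)
    (hd : ∀ i, |M i t x y - N i t x y| ≤ d) :
    |QQ c S M t x y - QQ c S N t x y| ≤ 4 * c * S * (m + n) * d := by
  have key : ∀ i j, |M i t x y * M j t x y - N i t x y * N j t x y| ≤ (m + n) * d := by
    intro i j
    have e : M i t x y * M j t x y - N i t x y * N j t x y =
        M i t x y * (M j t x y - N j t x y) + (M i t x y - N i t x y) * N j t x y := by ring
    rw [e]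
    refine (abs_add_le _ _).trans ?_
    rw [abs_mul, abs_mul]
    have h1 := mul_le_mul (hM i) (hd j) (abs_nonneg _) ((abs_nonneg _).trans (hM i))
    have h2 := mul_le_mul (hd i) (hN j) (abs_nonneg _) ((abs_nonneg _).trans (hd i))
    linarith
  have e : QQ c S M t x y - QQ c S N t x y = 2 * c * S *
      ((M 1 t x y * M 2 t x y - N 1 t x y * N 2 t x y) -
        (M 0 t x y * M 3 t x y - N 0 t x y * N 3 t x y)) := by unfold QQ; ring
  rw [e, abs_mul, abs_of_pos (by positivity : 0 < 2 * c * S)]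
  have h := (abs_sub (M 1 t x y * M 2 t x y - N 1 t x y * N 2 t x y)
        (M 0 t x y * M 3 t x y - N 0 t x y * N 3 t x y)).trans (add_le_add (key 1 2) (key 0 3))
  calc _ ≤ 2 * c * S * ((m + n) * d + (m + n) * d) := by gcongr
    _ = _ := by ring

theorem int_QQ_aux {c S τ τ' a₁ b₁ a₂ b₂ : ℝ} (hc : 0 < c) (hS : 0 < S)
    {M N : Fin 4 → ℝ → ℝ → ℝ → ℝ}
    (hM : ∀ i, Cont3 (M i) (PsetT (Icc τ τ') a₁ b₁ a₂ b₂))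
    (hN : ∀ i, Cont3 (N i) (PsetT (Icc τ τ') a₁ b₁ a₂ b₂))
    {t0 t : ℝ} (h0 : τ ≤ t0) (h1 : t0 ≤ t) (h2 : t ≤ τ') {X Y : ℝ → ℝ}
    (hX : Continuous X) (hY : Continuous Y)
    (hXm : ∀ s ∈ Icc t0 t, X s ∈ Icc a₁ b₁) (hYm : ∀ s ∈ Icc t0 t, Y s ∈ Icc a₂ b₂) :
    |(∫ s in t0..t, QQ c S M s (X s) (Y s)) - ∫ s in t0..t, QQ c S N s (X s) (Y s)| ≤
      (τ' - τ) * (4 * c * S) * (norm4 (PsetT (Icc τ τ') a₁ b₁ a₂ b₂) M +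
        norm4 (PsetT (Icc τ τ') a₁ b₁ a₂ b₂) N) *
        norm4 (PsetT (Icc τ τ') a₁ b₁ a₂ b₂) (fun i t x y => M i t x y - N i t x y) := by
  have hmem : ∀ s ∈ Icc t0 t, (s, X s, Y s) ∈ PsetT (Icc τ τ') a₁ b₁ a₂ b₂ := fun s hs =>
    ⟨⟨h0.trans hs.1, hs.2.trans h2⟩, hXm s hs, hYm s hs⟩
  have hD : ∀ i, Cont3 ((fun i t x y => M i t x y - N i t x y : Fin 4 → ℝ → ℝ → ℝ → ℝ) i)
      (PsetT (Icc τ τ') a₁ b₁ a₂ b₂) := fun i => (hM i).sub (hN i)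
  have hpath : ContinuousOn (fun s => (s, X s, Y s)) (Icc t0 t) := by fun_prop
  have hint : ∀ M : Fin 4 → ℝ → ℝ → ℝ → ℝ,
      (∀ i, Cont3 (M i) (PsetT (Icc τ τ') a₁ b₁ a₂ b₂)) →
      IntervalIntegrable (fun s => QQ c S M s (X s) (Y s)) volume t0 t := by
    intro M hM
    apply ContinuousOn.intervalIntegrable
    rw [uIcc_of_le h1]
    have hc' : ∀ i, ContinuousOn (fun s => M i s (X s) (Y s)) (Icc t0 t) := fun i =>
      ContinuousOn.comp (g := fun p : ℝ × ℝ × ℝ => M i p.1 p.2.1 p.2.2) (hM i) hpath hmem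
    exact continuousOn_const.mul (((hc' 1).mul (hc' 2)).sub ((hc' 0).mul (hc' 3)))
  rw [← intervalIntegral.integral_sub (hint M hM) (hint N hN)]
  have hb : ∀ s ∈ Icc t0 t, |QQ c S M s (X s) (Y s) - QQ c S N s (X s) (Y s)| ≤ _ := fun s hs =>
    QQ_diff_aux hc hS (fun i => le_norm4_aux isCompact_Icc hM i (hmem s hs))
      (fun i => le_norm4_aux isCompact_Icc hN i (hmem s hs))
      (fun i => le_norm4_aux isCompact_Icc hD i (hmem s hs))
  have hK := (abs_nonneg _).trans (hb t ⟨h1, le_rfl⟩)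
  have := intervalIntegral.norm_integral_le_of_norm_le_const (a := t0) (b := t)
    (f := fun s => QQ c S M s (X s) (Y s) - QQ c S N s (X s) (Y s))
    (fun s hs => by
      rw [uIoc_of_le h1] at hs
      exact hb s ⟨hs.1.le, hs.2⟩)
  rw [Real.norm_eq_abs, abs_of_nonneg (sub_nonneg.2 h1)] at this
  refine this.trans ((mul_le_mul_of_nonneg_left (by linarith : t - t0 ≤ τ' - τ) hK).trans_eq ?_)
  ring

/-- The estimate `‖𝒯(M) - 𝒯(N)‖ ≤ (τ'-τ)·4cS·(‖M‖+‖N‖)·‖M-N‖`. -/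
theorem Tcal_lipschitz
    (c S τ τ' a₁ b₁ a₂ b₂ : ℝ) (hc : 0 < c) (hS : 0 < S)
    (hτ : τ < τ') (ha : a₁ < b₁) (hb : a₂ < b₂)
    (N0 : Fin 4 → ℝ → ℝ → ℝ) (B1 B2 B3 B4 : ℝ → ℝ → ℝ)
    (hdata : NiceData (Icc τ τ') τ a₁ b₁ a₂ b₂ N0 B1 B2 B3 B4)
    (M N : Fin 4 → ℝ → ℝ → ℝ → ℝ)
    (hM : ∀ i, Cont3 (M i) (PsetT (Icc τ τ') a₁ b₁ a₂ b₂)) (hN : ∀ i, Cont3 (N i) (PsetT (Icc τ τ') a₁ b₁ a₂ b₂)) :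
    norm4 (PsetT (Icc τ τ') a₁ b₁ a₂ b₂) (fun i t x y => Tcal c S τ a₁ b₁ a₂ b₂ N0 B1 B2 B3 B4 M i t x y - Tcal c S τ a₁ b₁ a₂ b₂ N0 B1 B2 B3 B4 N i t x y) ≤
      (τ' - τ) * (4 * c * S) * (norm4 (PsetT (Icc τ τ') a₁ b₁ a₂ b₂) M + norm4 (PsetT (Icc τ τ') a₁ b₁ a₂ b₂) N) *
        norm4 (PsetT (Icc τ τ') a₁ b₁ a₂ b₂) (fun i t x y => M i t x y - N i t x y) := by
  have hne : (PsetT (Icc τ τ') a₁ b₁ a₂ b₂).Nonempty :=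
    ⟨(τ, a₁, a₂), ⟨le_rfl, hτ.le⟩, ⟨le_rfl, ha.le⟩, ⟨le_rfl, hb.le⟩⟩
  refine max_le (max_le ?_ ?_) (max_le ?_ ?_) <;> refine csSup_le (hne.image _) ?_ <;>
    rintro _ ⟨⟨t, x, y⟩, ⟨ht, hx, hy⟩, rfl⟩ <;> dsimp only at ht hx hy
  · change |(if _ then _ else _) - (if _ then _ else _)| ≤ _
    split_ifs with h
    · simp only [add_sub_add_right_eq_sub]
      exact int_QQ_aux hc hS hM hN (X := fun s => x + c * (s - t)) (Y := fun _ => y) le_rfl ht.1 ht.2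
        (by fun_prop) (by fun_prop) (fun s hs => by
        have e1 := mul_le_mul_of_nonneg_left hs.1 hc.le
        have e2 := mul_le_mul_of_nonneg_left hs.2 hc.le
        constructor <;> nlinarith [hx.1, hx.2, hy.1, hy.2]) (fun _ _ => hy)
    · simp only [add_sub_add_right_eq_sub]
      have hq : c * ((x - a₁) / c) = x - a₁ := by field_simp
      have hq0 : 0 ≤ (x - a₁) / c := div_nonneg (by linarith [hx.1, hx.2, hy.1, hy.2]) hc.le
      have hq1 : (x - a₁) / c ≤ t - τ := by
        rw [div_le_iff₀ hc]; linarith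
      exact int_QQ_aux hc hS hM hN (X := fun s => x + c * (s - t)) (Y := fun _ => y) (by linarith) (by linarith) ht.2
        (by fun_prop) (by fun_prop) (fun s hs => by
        have e1 := mul_le_mul_of_nonneg_left hs.1 hc.le
        have e2 := mul_le_mul_of_nonneg_left hs.2 hc.le
        constructor <;> nlinarith [hx.1, hx.2, hy.1, hy.2]) (fun _ _ => hy)
  · change |(if _ then _ else _) - (if _ then _ else _)| ≤ _
    split_ifs with h
    · simp only [intervalIntegral.integral_neg, add_sub_add_right_eq_sub, neg_sub_neg]
      rw [abs_sub_comm]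
      exact int_QQ_aux hc hS hM hN (X := fun _ => x) (Y := fun s => y + c * (s - t)) le_rfl ht.1 ht.2
        (by fun_prop) (by fun_prop) (fun _ _ => hx)
        (fun s hs => by
        have e1 := mul_le_mul_of_nonneg_left hs.1 hc.le
        have e2 := mul_le_mul_of_nonneg_left hs.2 hc.le
        constructor <;> nlinarith [hx.1, hx.2, hy.1, hy.2])
    · simp only [intervalIntegral.integral_neg, add_sub_add_right_eq_sub, neg_sub_neg]
      rw [abs_sub_comm]
      have hq : c * ((y - a₂) / c) = y - a₂ := by field_simp
      have hq0 : 0 ≤ (y - a₂) / c := div_nonneg (by linarith [hx.1, hx.2, hy.1, hy.2]) hc.le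
      have hq1 : (y - a₂) / c ≤ t - τ := by
        rw [div_le_iff₀ hc]; linarith
      exact int_QQ_aux hc hS hM hN (X := fun _ => x) (Y := fun s => y + c * (s - t)) (by linarith) (by linarith) ht.2
        (by fun_prop) (by fun_prop) (fun _ _ => hx)
        (fun s hs => by
        have e1 := mul_le_mul_of_nonneg_left hs.1 hc.le
        have e2 := mul_le_mul_of_nonneg_left hs.2 hc.le
        constructor <;> nlinarith [hx.1, hx.2, hy.1, hy.2])
  · change |(if _ then _ else _) - (if _ then _ else _)| ≤ _
    split_ifs with h
    · simp only [intervalIntegral.integral_neg, add_sub_add_right_eq_sub, neg_sub_neg]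
      rw [abs_sub_comm]
      exact int_QQ_aux hc hS hM hN (X := fun _ => x) (Y := fun s => y - c * (s - t)) le_rfl ht.1 ht.2
        (by fun_prop) (by fun_prop) (fun _ _ => hx)
        (fun s hs => by
        have e1 := mul_le_mul_of_nonneg_left hs.1 hc.le
        have e2 := mul_le_mul_of_nonneg_left hs.2 hc.le
        constructor <;> nlinarith [hx.1, hx.2, hy.1, hy.2])
    · simp only [intervalIntegral.integral_neg, add_sub_add_right_eq_sub, neg_sub_neg]
      rw [abs_sub_comm]
      have hq : c * ((b₂ - y) / c) = b₂ - y := by field_simp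
      have hq0 : 0 ≤ (b₂ - y) / c := div_nonneg (by linarith [hx.1, hx.2, hy.1, hy.2]) hc.le
      have hq1 : (b₂ - y) / c ≤ t - τ := by
        rw [div_le_iff₀ hc]; linarith
      exact int_QQ_aux hc hS hM hN (X := fun _ => x) (Y := fun s => y - c * (s - t)) (by linarith) (by linarith) ht.2
        (by fun_prop) (by fun_prop) (fun _ _ => hx)
        (fun s hs => by
        have e1 := mul_le_mul_of_nonneg_left hs.1 hc.le
        have e2 := mul_le_mul_of_nonneg_left hs.2 hc.le
        constructor <;> nlinarith [hx.1, hx.2, hy.1, hy.2])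
  · change |(if _ then _ else _) - (if _ then _ else _)| ≤ _
    split_ifs with h
    · simp only [add_sub_add_right_eq_sub]
      exact int_QQ_aux hc hS hM hN (X := fun s => x - c * (s - t)) (Y := fun _ => y) le_rfl ht.1 ht.2
        (by fun_prop) (by fun_prop) (fun s hs => by
        have e1 := mul_le_mul_of_nonneg_left hs.1 hc.le
        have e2 := mul_le_mul_of_nonneg_left hs.2 hc.le
        constructor <;> nlinarith [hx.1, hx.2, hy.1, hy.2]) (fun _ _ => hy)
    · simp only [add_sub_add_right_eq_sub]
      have hq : c * ((b₁ - x) / c) = b₁ - x := by field_simp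
      have hq0 : 0 ≤ (b₁ - x) / c := div_nonneg (by linarith [hx.1, hx.2, hy.1, hy.2]) hc.le
      have hq1 : (b₁ - x) / c ≤ t - τ := by
        rw [div_le_iff₀ hc]; linarith
      exact int_QQ_aux hc hS hM hN (X := fun s => x - c * (s - t)) (Y := fun _ => y) (by linarith) (by linarith) ht.2
        (by fun_prop) (by fun_prop) (fun s hs => by
        have e1 := mul_le_mul_of_nonneg_left hs.1 hc.le
        have e2 := mul_le_mul_of_nonneg_left hs.2 hc.le
        constructor <;> nlinarith [hx.1, hx.2, hy.1, hy.2]) (fun _ _ => hy)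

end
end

section
/- For every M ∈ E⁴ one has 𝒩(𝒯(M)) ≤ p·𝒩(M)² + q, where p = cS(8 + 4/c + (8+8c)(τ'−τ)) and q is the maximum of the ‖·‖₁ norms of the transported data functions; consequently 𝒯(𝓜_R) ⊆ 𝓜_{pR²+q} for every R > 0, and 𝒯 is a compact operator on 𝓜_R. -/
open Set MeasureTheory

noncomputable section

lemma lip1d_aux {f : ℝ → ℝ} {l r K : ℝ} (hlr : l ≤ r) (hf : ContinuousOn f (Icc l r))
    (F : Set ℝ) (hF : F.Finite)
    (hd : ∀ x ∈ Ioo l r \ F, ∃ d, HasDerivAt f d x ∧ |d| ≤ K) : |f r - f l| ≤ K * (r - l) := by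
  have hd1 : ∀ x ∈ Ioo l r \ F, HasDerivAt f (deriv f x) x := by
    intro x hx
    obtain ⟨d, h, -⟩ := hd x hx
    exact h.differentiableAt.hasDerivAt
  have hd2 : ∀ x ∈ Ioo l r \ F, ‖deriv f x‖ ≤ K := by
    intro x hx
    obtain ⟨d, h, h'⟩ := hd x hx
    rw [h.deriv]; exact h'
  have hae : ∀ᵐ x ∂(volume.restrict (uIoc l r)), ‖deriv f x‖ ≤ K := by
    have h1 : ∀ᵐ x : ℝ, x ∉ F ∪ {r} := by
      exact compl_mem_ae_iff.2 ((hF.union (finite_singleton r)).measure_zero _)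
    rw [ae_restrict_iff' measurableSet_uIoc]
    filter_upwards [h1] with x hx hx2
    rw [uIoc_of_le hlr] at hx2
    simp only [mem_union, mem_singleton_iff, not_or] at hx
    exact hd2 x ⟨⟨hx2.1, lt_of_le_of_ne hx2.2 hx.2⟩, hx.1⟩
  have hInt : IntervalIntegrable (deriv f) volume l r := by
    refine (intervalIntegrable_const (c := K)).mono_fun' (measurable_deriv f).aestronglyMeasurable hae
  have := integral_eq_of_hasDerivAt_off_countable_of_le f (deriv f) hlr
    hF.countable hf hd1 hInt
  rw [← this]
  have h2 := intervalIntegral.norm_integral_le_of_norm_le_const_ae (a := l) (b := r) (C := K)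
    (f := deriv f) ((ae_restrict_iff' measurableSet_uIoc).1 hae)
  rwa [abs_of_nonneg (sub_nonneg.2 hlr)] at h2

lemma lip1d {f : ℝ → ℝ} {l r K : ℝ} (hf : ContinuousOn f (Icc l r))
    (F : Set ℝ) (hF : F.Finite)
    (hd : ∀ x ∈ Ioo l r \ F, ∃ d, HasDerivAt f d x ∧ |d| ≤ K) :
    ∀ x₁ ∈ Icc l r, ∀ x₂ ∈ Icc l r, |f x₁ - f x₂| ≤ K * |x₁ - x₂| := by
  have key : ∀ x₁ ∈ Icc l r, ∀ x₂ ∈ Icc l r, x₁ ≤ x₂ → |f x₂ - f x₁| ≤ K * (x₂ - x₁) := by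
    intro x₁ h₁ x₂ h₂ h
    refine lip1d_aux h (hf.mono (Icc_subset_Icc h₁.1 h₂.2)) F hF ?_
    intro x hx
    exact hd x ⟨⟨h₁.1.trans_lt hx.1.1, hx.1.2.trans_le h₂.2⟩, hx.2⟩
  intro x₁ h₁ x₂ h₂
  rcases le_total x₁ x₂ with h | h
  · rw [abs_sub_comm, abs_sub_comm x₁, abs_of_nonneg (sub_nonneg.2 h)]
    exact key _ h₁ _ h₂ h
  · rw [abs_of_nonneg (sub_nonneg.2 h)]
    exact key _ h₂ _ h₁ h

lemma bd_closure {h : ℝ → ℝ} {l r K : ℝ} (hlr : l < r) (F : Set ℝ) (hF : F.Finite)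
    (hc : ContinuousOn h (Icc l r)) (hb : ∀ x ∈ Ioo l r \ F, |h x| ≤ K) :
    ∀ x ∈ Icc l r, |h x| ≤ K := by
  have hd : Icc l r ⊆ closure (Ioo l r \ F) := by
    have h1 : Dense (Fᶜ) := hF.countable.dense_compl ℝ
    have := h1.open_subset_closure_inter (t := Ioo l r) isOpen_Ioo
    rw [sdiff_eq, ← closure_Ioo hlr.ne]
    exact closure_minimal this isClosed_closure
  intro x hx
  have hx' := hd hx
  have hcx : ContinuousWithinAt (fun x => |h x|) (Ioo l r \ F) x :=
    ((hc x hx).mono (sdiff_subset.trans Ioo_subset_Icc_self)).abs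
  exact hcx.closure_le hx' continuousWithinAt_const hb

/-- regularity of partials on a set, with bounds -/
def D1 (A : Set (ℝ × ℝ × ℝ)) (u : ℝ → ℝ → ℝ → ℝ) (Kt Kx Ky : ℝ) : Prop :=
  ∃ dt dx dy : ℝ × ℝ × ℝ → ℝ,
    (∀ p ∈ A, HasDerivAt (fun s => u s p.2.1 p.2.2) (dt p) p.1 ∧
      HasDerivAt (fun s => u p.1 s p.2.2) (dx p) p.2.1 ∧
      HasDerivAt (fun s => u p.1 p.2.1 s) (dy p) p.2.2) ∧
    (ContinuousOn dt A ∧ ContinuousOn dx A ∧ ContinuousOn dy A) ∧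
    (∀ p ∈ A, |dt p| ≤ Kt ∧ |dx p| ≤ Kx ∧ |dy p| ≤ Ky)

structure EB (c τ τ' a b a' b' : ℝ) (u : ℝ → ℝ → ℝ → ℝ) (K0 Kt Kx Ky : ℝ) : Prop where
  cont : Cont3 u (PsetT (Icc τ τ') a b a' b')
  bd : ∀ p ∈ PsetT (Icc τ τ') a b a' b', |u p.1 p.2.1 p.2.2| ≤ K0
  reg : D1 (Dset c τ τ' a b a' b') u Kt Kx Ky

lemma Cont3.line_t {u : ℝ → ℝ → ℝ → ℝ} {T : Set ℝ} {a b a' b' : ℝ} (h : Cont3 u (PsetT T a b a' b'))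
    {x y : ℝ} (hx : x ∈ Icc a b) (hy : y ∈ Icc a' b') : ContinuousOn (fun t => u t x y) T :=
  ContinuousOn.comp (f := fun t : ℝ => (t, x, y)) h (by fun_prop) (fun _ ht => ⟨ht, hx, hy⟩)

lemma Cont3.line_x {u : ℝ → ℝ → ℝ → ℝ} {T : Set ℝ} {a b a' b' : ℝ} (h : Cont3 u (PsetT T a b a' b'))
    {t y : ℝ} (ht : t ∈ T) (hy : y ∈ Icc a' b') : ContinuousOn (fun x => u t x y) (Icc a b) :=
  ContinuousOn.comp (f := fun x : ℝ => (t, x, y)) h (by fun_prop) (fun _ hx => ⟨ht, hx, hy⟩)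

lemma Cont3.line_y {u : ℝ → ℝ → ℝ → ℝ} {T : Set ℝ} {a b a' b' : ℝ} (h : Cont3 u (PsetT T a b a' b'))
    {t x : ℝ} (ht : t ∈ T) (hx : x ∈ Icc a b) : ContinuousOn (fun y => u t x y) (Icc a' b') :=
  ContinuousOn.comp (f := fun y : ℝ => (t, x, y)) h (by fun_prop) (fun _ hy => ⟨ht, hx, hy⟩)

section
variable {c τ τ' a b a' b' : ℝ} {u : ℝ → ℝ → ℝ → ℝ} {K0 Kt Kx Ky : ℝ}

lemma EB.lip_x (hτ : τ < τ') (hb : a' < b')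
    (h : EB c τ τ' a b a' b' u K0 Kt Kx Ky) {t x₁ x₂ y : ℝ} (ht : t ∈ Icc τ τ')
    (hx₁ : x₁ ∈ Icc a b) (hx₂ : x₂ ∈ Icc a b) (hy : y ∈ Icc a' b') :
    |u t x₁ y - u t x₂ y| ≤ Kx * |x₁ - x₂| := by
  obtain ⟨dt, dx, dy, hd, -, hbd⟩ := h.reg
  have s1 : ∀ t ∈ Ioo τ τ', ∀ y ∈ Icc a' b', |u t x₁ y - u t x₂ y| ≤ Kx * |x₁ - x₂| := by
    intro t ht
    refine bd_closure hb {a' + c * (t - τ), b' - c * (t - τ)} (by simp) ?_ ?_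
    · exact (h.cont.line_y (Ioo_subset_Icc_self ht) hx₁).sub
        (h.cont.line_y (Ioo_subset_Icc_self ht) hx₂)
    · rintro y ⟨hy, hyF⟩
      simp only [mem_insert_iff, mem_singleton_iff, not_or] at hyF
      refine lip1d (f := fun x => u t x y)
        (h.cont.line_x (Ioo_subset_Icc_self ht) (Ioo_subset_Icc_self hy))
        {a + c * (t - τ), b - c * (t - τ)} (by simp) ?_ _ hx₁ _ hx₂
      rintro x ⟨hx, hxF⟩
      simp only [mem_insert_iff, mem_singleton_iff, not_or] at hxF
      have hp : (t, x, y) ∈ Dset c τ τ' a b a' b' := by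
        refine ⟨⟨ht, hx, hy⟩, ?_, ?_, ?_, ?_⟩ <;> dsimp only <;> intro he
        · exact hxF.1 (by linarith)
        · exact hyF.1 (by linarith)
        · exact hyF.2 (by linarith)
        · exact hxF.2 (by linarith)
      exact ⟨_, (hd _ hp).2.1, (hbd _ hp).2.1⟩
  refine bd_closure (h := fun t => u t x₁ y - u t x₂ y) hτ ∅ finite_empty
    ((h.cont.line_t hx₁ hy).sub (h.cont.line_t hx₂ hy)) ?_ t ht
  rintro t ⟨ht, -⟩
  exact s1 t ht y hy

lemma EB.lip_y (hτ : τ < τ') (ha : a < b)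
    (h : EB c τ τ' a b a' b' u K0 Kt Kx Ky) {t x y₁ y₂ : ℝ} (ht : t ∈ Icc τ τ')
    (hx : x ∈ Icc a b) (hy₁ : y₁ ∈ Icc a' b') (hy₂ : y₂ ∈ Icc a' b') :
    |u t x y₁ - u t x y₂| ≤ Ky * |y₁ - y₂| := by
  obtain ⟨dt, dx, dy, hd, -, hbd⟩ := h.reg
  have s1 : ∀ t ∈ Ioo τ τ', ∀ x ∈ Icc a b, |u t x y₁ - u t x y₂| ≤ Ky * |y₁ - y₂| := by
    intro t ht
    refine bd_closure ha {a + c * (t - τ), b - c * (t - τ)} (by simp) ?_ ?_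
    · exact (h.cont.line_x (Ioo_subset_Icc_self ht) hy₁).sub
        (h.cont.line_x (Ioo_subset_Icc_self ht) hy₂)
    · rintro x ⟨hx, hxF⟩
      simp only [mem_insert_iff, mem_singleton_iff, not_or] at hxF
      refine lip1d (f := fun y => u t x y)
        (h.cont.line_y (Ioo_subset_Icc_self ht) (Ioo_subset_Icc_self hx))
        {a' + c * (t - τ), b' - c * (t - τ)} (by simp) ?_ _ hy₁ _ hy₂
      rintro y ⟨hy, hyF⟩
      simp only [mem_insert_iff, mem_singleton_iff, not_or] at hyF
      have hp : (t, x, y) ∈ Dset c τ τ' a b a' b' := by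
        refine ⟨⟨ht, hx, hy⟩, ?_, ?_, ?_, ?_⟩ <;> dsimp only <;> intro he
        · exact hxF.1 (by linarith)
        · exact hyF.1 (by linarith)
        · exact hyF.2 (by linarith)
        · exact hxF.2 (by linarith)
      exact ⟨_, (hd _ hp).2.2, (hbd _ hp).2.2⟩
  refine bd_closure (h := fun t => u t x y₁ - u t x y₂) hτ ∅ finite_empty
    ((h.cont.line_t hx hy₁).sub (h.cont.line_t hx hy₂)) ?_ t ht
  rintro t ⟨ht, -⟩
  exact s1 t ht x hx

lemma EB.lip_t (hc : 0 < c) (ha : a < b) (hb : a' < b')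
    (h : EB c τ τ' a b a' b' u K0 Kt Kx Ky) {t₁ t₂ x y : ℝ} (ht₁ : t₁ ∈ Icc τ τ')
    (ht₂ : t₂ ∈ Icc τ τ') (hx : x ∈ Icc a b) (hy : y ∈ Icc a' b') :
    |u t₁ x y - u t₂ x y| ≤ Kt * |t₁ - t₂| := by
  obtain ⟨dt, dx, dy, hd, -, hbd⟩ := h.reg
  have s1 : ∀ x ∈ Ioo a b, ∀ y ∈ Icc a' b', |u t₁ x y - u t₂ x y| ≤ Kt * |t₁ - t₂| := by
    intro x hx
    refine bd_closure hb ∅ finite_empty ?_ ?_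
    · exact (h.cont.line_y ht₁ (Ioo_subset_Icc_self hx)).sub
        (h.cont.line_y ht₂ (Ioo_subset_Icc_self hx))
    · rintro y ⟨hy, -⟩
      refine lip1d (f := fun t => u t x y)
        (h.cont.line_t (Ioo_subset_Icc_self hx) (Ioo_subset_Icc_self hy))
        {τ + (x - a) / c, τ + (y - a') / c, τ + (b' - y) / c, τ + (b - x) / c}
        (by simp) ?_ _ ht₁ _ ht₂
      rintro t ⟨ht, htF⟩
      simp only [mem_insert_iff, mem_singleton_iff, not_or] at htF
      have hp : (t, x, y) ∈ Dset c τ τ' a b a' b' := by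
        refine ⟨⟨ht, hx, hy⟩, ?_, ?_, ?_, ?_⟩ <;> dsimp only <;> intro he
        · exact htF.1 (by field_simp; linarith)
        · exact htF.2.1 (by field_simp; linarith)
        · exact htF.2.2.1 (by field_simp; linarith)
        · exact htF.2.2.2 (by field_simp; linarith)
      exact ⟨_, (hd _ hp).1, (hbd _ hp).1⟩
  refine bd_closure (h := fun x => u t₁ x y - u t₂ x y) ha ∅ finite_empty
    ((h.cont.line_x ht₁ hy).sub (h.cont.line_x ht₂ hy)) ?_ x hx
  rintro x ⟨hx, -⟩
  exact s1 x hx y hy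

end

lemma leib_end {f : ℝ → ℝ → ℝ} (hf : ∀ h, Continuous (f h)) {L : ℝ}
    (hL : ∀ h h' s, |f h s - f h' s| ≤ L * |h - h'|) {β : ℝ → ℝ} {β' h0 : ℝ}
    (hβ : HasDerivAt β β' h0) :
    HasDerivAt (fun h => ∫ s in β h0..β h, f h s) (f h0 (β h0) * β') h0 := by
  have e : (fun h => ∫ s in β h0..β h, f h s) = (fun h => (∫ s in β h0..β h, f h0 s) +
      ∫ s in β h0..β h, (f h s - f h0 s)) := by
    funext h
    rw [← intervalIntegral.integral_add]
    · simp
    · exact (hf h0).intervalIntegrable _ _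
    · exact ((hf h).sub (hf h0)).intervalIntegrable _ _
  rw [e]
  have h1 : HasDerivAt (fun h => ∫ s in β h0..β h, f h0 s) (f h0 (β h0) * β') h0 :=
    ((hf h0).integral_hasStrictDerivAt (β h0) (β h0)).hasDerivAt.comp h0 hβ
  have h2 : HasDerivAt (fun h => ∫ s in β h0..β h, (f h s - f h0 s)) 0 h0 := by
    rw [hasDerivAt_iff_isLittleO]
    simp only [intervalIntegral.integral_same, sub_zero, smul_zero]
    have o1 : (fun h => β h - β h0) =o[nhds h0] (fun _ => (1 : ℝ)) := by
      rw [Asymptotics.isLittleO_one_iff]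
      have := hβ.continuousAt.tendsto.sub_const (β h0)
      simpa using this
    have o2 : (fun h => (h - h0) * (β h - β h0)) =o[nhds h0] (fun h => (h - h0) * 1) :=
      (Asymptotics.isBigO_refl (fun h => h - h0) (nhds h0)).mul_isLittleO o1
    simp only [mul_one] at o2
    refine Asymptotics.IsBigO.trans_isLittleO ?_ o2
    refine Asymptotics.IsBigO.of_bound L (Filter.Eventually.of_forall fun h => ?_)
    have := intervalIntegral.norm_integral_le_of_norm_le_const (a := β h0) (b := β h)
      (C := L * |h - h0|) (f := fun s => f h s - f h0 s) (fun s _ => hL h h0 s)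
    refine this.trans (le_of_eq ?_)
    rw [norm_mul, Real.norm_eq_abs, Real.norm_eq_abs]; ring
  have h3 := h1.add h2
  rw [add_zero] at h3
  exact h3

lemma leib {f : ℝ → ℝ → ℝ} (hf : ∀ h, Continuous (f h)) {L : ℝ}
    (hL : ∀ h h' s, |f h s - f h' s| ≤ L * |h - h'|) {α β f' : ℝ → ℝ} {α' β' h0 : ℝ}
    (hα : HasDerivAt α α' h0) (hβ : HasDerivAt β β' h0) (hm : Measurable f')
    (hd : ∀ᵐ s, s ∈ uIoc (α h0) (β h0) → HasDerivAt (fun h => f h s) (f' s) h0) :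
    HasDerivAt (fun h => ∫ s in α h..β h, f h s)
      ((∫ s in α h0..β h0, f' s) + f h0 (β h0) * β' - f h0 (α h0) * α') h0 := by
  have e : (fun h => ∫ s in α h..β h, f h s) = (fun h => (∫ s in α h0..β h0, f h s) +
      (∫ s in β h0..β h, f h s) - ∫ s in α h0..α h, f h s) := by
    funext h
    have hi : ∀ a b, IntervalIntegrable (f h) volume a b := fun a b =>
      (hf h).intervalIntegrable a b
    rw [intervalIntegral.integral_add_adjacent_intervals (hi _ _) (hi _ _),
      eq_sub_iff_add_eq, add_comm,
      intervalIntegral.integral_add_adjacent_intervals (hi _ _) (hi _ _)]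
  rw [e]
  refine (HasDerivAt.add ?_ (leib_end hf hL hβ)).sub (leib_end hf hL hα)
  refine (intervalIntegral.hasDerivAt_integral_of_dominated_loc_of_lip (s := univ)
    (bound := fun _ => L) Filter.univ_mem
    (Filter.Eventually.of_forall fun h => (hf h).aestronglyMeasurable)
    ((hf h0).intervalIntegrable _ _) hm.aestronglyMeasurable
    (Filter.Eventually.of_forall fun s _ => ?_) (intervalIntegrable_const) hd).2
  refine LipschitzOnWith.of_dist_le_mul fun h _ h' _ => ?_
  rw [Real.dist_eq, Real.dist_eq, Real.coe_nnabs]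
  refine (hL h h' s).trans ?_
  gcongr
  exact le_abs_self L

lemma cont_int {X : Type*} [TopologicalSpace X] [FirstCountableTopology X]
    {G : X → ℝ → ℝ} {K : ℝ} (hm : ∀ p, Measurable (G p))
    (hb : ∀ p s, |G p s| ≤ K) {α β : X → ℝ} {p0 : X} (hα : ContinuousAt α p0)
    (hβ : ContinuousAt β p0)
    (hd : ∀ᵐ s, s ∈ uIoc (α p0) (β p0) → ContinuousAt (fun p => G p s) p0) :
    ContinuousAt (fun p => ∫ s in α p..β p, G p s) p0 := by
  have hi : ∀ p a b, IntervalIntegrable (G p) volume a b := fun p a b =>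
    (intervalIntegrable_const (c := K)).mono_fun' (hm p).aestronglyMeasurable
      (Filter.Eventually.of_forall fun s => hb p s)
  have e : (fun p => ∫ s in α p..β p, G p s) = (fun p => (∫ s in α p0..β p0, G p s) +
      (∫ s in β p0..β p, G p s) - ∫ s in α p0..α p, G p s) := by
    funext h
    rw [intervalIntegral.integral_add_adjacent_intervals (hi _ _ _) (hi _ _ _),
      eq_sub_iff_add_eq, add_comm,
      intervalIntegral.integral_add_adjacent_intervals (hi _ _ _) (hi _ _ _)]
  have hz : ∀ γ : X → ℝ, ContinuousAt γ p0 →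
      ContinuousAt (fun p => ∫ s in γ p0..γ p, G p s) p0 := by
    intro γ hγ
    rw [ContinuousAt, intervalIntegral.integral_same]
    have h0 : Filter.Tendsto (fun p => K * |γ p - γ p0|) (nhds p0) (nhds 0) := by
      have := ((hγ.tendsto.sub_const (γ p0)).abs).const_mul K
      simpa using this
    refine squeeze_zero_norm (fun p => ?_) h0
    exact intervalIntegral.norm_integral_le_of_norm_le_const (fun s _ => hb p s)
  rw [e]
  refine (ContinuousAt.add ?_ (hz β hβ)).sub (hz α hα)
  exact intervalIntegral.continuousAt_of_dominated_interval (bound := fun _ => K)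
    (Filter.Eventually.of_forall fun p => (hm p).aestronglyMeasurable)
    (Filter.Eventually.of_forall fun p => Filter.Eventually.of_forall fun s _ => hb p s)
    intervalIntegrable_const hd

/-- globally Lipschitz (in `x`, `y`) extension -/
structure GX (D : Set (ℝ × ℝ × ℝ)) (g : ℝ → ℝ → ℝ → ℝ) (K0 Kt Kx Ky : ℝ) : Prop where
  cont : Continuous (fun p : ℝ × ℝ × ℝ => g p.1 p.2.1 p.2.2)
  bd : ∀ t x y, |g t x y| ≤ K0
  lipx : ∀ t x x' y, |g t x y - g t x' y| ≤ Kx * |x - x'|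
  lipy : ∀ t x y y', |g t x y - g t x y'| ≤ Ky * |y - y'|
  reg : D1 D g Kt Kx Ky

lemma isOpen_Dset (c τ τ' a b a' b' : ℝ) : IsOpen (Dset c τ τ' a b a' b') := by
  refine (isOpen_Ioo.prod (isOpen_Ioo.prod isOpen_Ioo)).inter ?_
  refine IsOpen.inter ?_ (IsOpen.inter ?_ (IsOpen.inter ?_ ?_)) <;>
    exact isOpen_ne_fun (by fun_prop) (by fun_prop)

lemma nhds_lines {A : Set (ℝ × ℝ × ℝ)} (hA : IsOpen A) {p : ℝ × ℝ × ℝ} (hp : p ∈ A) :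
    (∀ᶠ s in nhds p.1, (s, p.2.1, p.2.2) ∈ A) ∧ (∀ᶠ s in nhds p.2.1, (p.1, s, p.2.2) ∈ A) ∧
    (∀ᶠ s in nhds p.2.2, (p.1, p.2.1, s) ∈ A) := by
  refine ⟨?_, ?_, ?_⟩
  · exact (show Continuous fun s : ℝ => (s, p.2.1, p.2.2) by fun_prop).continuousAt.preimage_mem_nhds
      (hA.mem_nhds hp)
  · exact (show Continuous fun s : ℝ => (p.1, s, p.2.2) by fun_prop).continuousAt.preimage_mem_nhds
      (hA.mem_nhds hp)
  · exact (show Continuous fun s : ℝ => (p.1, p.2.1, s) by fun_prop).continuousAt.preimage_mem_nhds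
      (hA.mem_nhds hp)

lemma D1.congr {A : Set (ℝ × ℝ × ℝ)} (hA : IsOpen A) {u v : ℝ → ℝ → ℝ → ℝ} {Kt Kx Ky : ℝ}
    (h : D1 A u Kt Kx Ky) (huv : ∀ p ∈ A, v p.1 p.2.1 p.2.2 = u p.1 p.2.1 p.2.2) :
    D1 A v Kt Kx Ky := by
  obtain ⟨dt, dx, dy, hd, hc, hb⟩ := h
  refine ⟨dt, dx, dy, fun p hp => ?_, hc, hb⟩
  obtain ⟨n1, n2, n3⟩ := nhds_lines hA hp
  obtain ⟨d1, d2, d3⟩ := hd p hp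
  exact ⟨d1.congr_of_eventuallyEq (n1.mono fun s hs => huv _ hs),
    d2.congr_of_eventuallyEq (n2.mono fun s hs => huv _ hs),
    d3.congr_of_eventuallyEq (n3.mono fun s hs => huv _ hs)⟩

lemma D1.mono {A B : Set (ℝ × ℝ × ℝ)} {u : ℝ → ℝ → ℝ → ℝ} {Kt Kx Ky Kt' Kx' Ky' : ℝ}
    (h : D1 A u Kt Kx Ky) (hBA : B ⊆ A) (ht : Kt ≤ Kt') (hx : Kx ≤ Kx') (hy : Ky ≤ Ky') :
    D1 B u Kt' Kx' Ky' := by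
  obtain ⟨dt, dx, dy, hd, hc, hb⟩ := h
  exact ⟨dt, dx, dy, fun p hp => hd p (hBA hp),
    ⟨hc.1.mono hBA, hc.2.1.mono hBA, hc.2.2.mono hBA⟩, fun p hp =>
      ⟨(hb p (hBA hp)).1.trans ht, (hb p (hBA hp)).2.1.trans hx, (hb p (hBA hp)).2.2.trans hy⟩⟩

lemma D1.add {A : Set (ℝ × ℝ × ℝ)} {u v : ℝ → ℝ → ℝ → ℝ} {Kt Kx Ky Kt' Kx' Ky' : ℝ}
    (h : D1 A u Kt Kx Ky) (h' : D1 A v Kt' Kx' Ky') :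
    D1 A (fun t x y => u t x y + v t x y) (Kt + Kt') (Kx + Kx') (Ky + Ky') := by
  obtain ⟨dt, dx, dy, hd, hc, hb⟩ := h
  obtain ⟨dt', dx', dy', hd', hc', hb'⟩ := h'
  refine ⟨fun p => dt p + dt' p, fun p => dx p + dx' p, fun p => dy p + dy' p,
    fun p hp => ⟨(hd p hp).1.add (hd' p hp).1, (hd p hp).2.1.add (hd' p hp).2.1,
      (hd p hp).2.2.add (hd' p hp).2.2⟩,
    ⟨hc.1.add hc'.1, hc.2.1.add hc'.2.1, hc.2.2.add hc'.2.2⟩, fun p hp => ⟨?_, ?_, ?_⟩⟩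
  · exact (abs_add_le _ _).trans (add_le_add (hb p hp).1 (hb' p hp).1)
  · exact (abs_add_le _ _).trans (add_le_add (hb p hp).2.1 (hb' p hp).2.1)
  · exact (abs_add_le _ _).trans (add_le_add (hb p hp).2.2 (hb' p hp).2.2)

/-- standard form of `D1` -/
lemma D1.std {A : Set (ℝ × ℝ × ℝ)} {u : ℝ → ℝ → ℝ → ℝ} {Kt Kx Ky : ℝ}
    (h : D1 A u Kt Kx Ky) : (∀ p ∈ A, HasPartials u p) ∧
    (Cont3 (pdtF u) A ∧ Cont3 (pdxF u) A ∧ Cont3 (pdyF u) A) ∧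
    ∀ p ∈ A, |pdtF u p.1 p.2.1 p.2.2| ≤ Kt ∧
    |pdxF u p.1 p.2.1 p.2.2| ≤ Kx ∧ |pdyF u p.1 p.2.1 p.2.2| ≤ Ky := by
  obtain ⟨dt, dx, dy, hd, hc, hb⟩ := h
  have e1 : ∀ p ∈ A, pdtF u p.1 p.2.1 p.2.2 = dt p := fun p hp => (hd p hp).1.deriv
  have e2 : ∀ p ∈ A, pdxF u p.1 p.2.1 p.2.2 = dx p := fun p hp => (hd p hp).2.1.deriv
  have e3 : ∀ p ∈ A, pdyF u p.1 p.2.1 p.2.2 = dy p := fun p hp => (hd p hp).2.2.deriv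
  refine ⟨fun p hp => ⟨(hd p hp).1.differentiableAt, (hd p hp).2.1.differentiableAt,
    (hd p hp).2.2.differentiableAt⟩, ⟨hc.1.congr e1, hc.2.1.congr e2, hc.2.2.congr e3⟩,
    fun p hp => ?_⟩
  rw [e1 p hp, e2 p hp, e3 p hp]
  exact hb p hp

lemma D1.of_std {A : Set (ℝ × ℝ × ℝ)} {u : ℝ → ℝ → ℝ → ℝ} {Kt Kx Ky : ℝ}
    (h1 : ∀ p ∈ A, HasPartials u p)
    (h2 : Cont3 (pdtF u) A ∧ Cont3 (pdxF u) A ∧ Cont3 (pdyF u) A)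
    (h3 : ∀ p ∈ A, |pdtF u p.1 p.2.1 p.2.2| ≤ Kt ∧
    |pdxF u p.1 p.2.1 p.2.2| ≤ Kx ∧ |pdyF u p.1 p.2.1 p.2.2| ≤ Ky) : D1 A u Kt Kx Ky :=
  ⟨fun p => pdtF u p.1 p.2.1 p.2.2, fun p => pdxF u p.1 p.2.1 p.2.2,
    fun p => pdyF u p.1 p.2.1 p.2.2, fun p hp => ⟨(h1 p hp).1.hasDerivAt,
    (h1 p hp).2.1.hasDerivAt, (h1 p hp).2.2.hasDerivAt⟩, h2, h3⟩

lemma D1.union {A B : Set (ℝ × ℝ × ℝ)} (hA : IsOpen A) (hB : IsOpen B)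
    {u : ℝ → ℝ → ℝ → ℝ} {Kt Kx Ky : ℝ}
    (h : D1 A u Kt Kx Ky) (h' : D1 B u Kt Kx Ky) : D1 (A ∪ B) u Kt Kx Ky := by
  have s := h.std
  have s' := h'.std
  refine D1.of_std ?_ ⟨?_, ?_, ?_⟩ ?_
  · rintro p (hp | hp)
    exacts [s.1 p hp, s'.1 p hp]
  · exact s.2.1.1.union_of_isOpen s'.2.1.1 hA hB
  · exact s.2.1.2.1.union_of_isOpen s'.2.1.2.1 hA hB
  · exact s.2.1.2.2.union_of_isOpen s'.2.1.2.2 hA hB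
  · rintro p (hp | hp)
    exacts [s.2.2 p hp, s'.2.2 p hp]

/-- clamp to an interval -/
def cl (l r t : ℝ) : ℝ := max l (min r t)

lemma cl_mem {l r : ℝ} (h : l ≤ r) (t : ℝ) : cl l r t ∈ Icc l r :=
  ⟨le_max_left _ _, max_le h (min_le_left _ _)⟩

lemma cl_eq {l r t : ℝ} (h : t ∈ Icc l r) : cl l r t = t := by
  rw [cl, min_eq_right h.2, max_eq_right h.1]

lemma cl_lip (l r s t : ℝ) : |cl l r s - cl l r t| ≤ |s - t| := by
  unfold cl
  refine (abs_max_sub_max_le_max _ _ _ _).trans (max_le (by simp) ?_)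
  exact (abs_min_sub_min_le_max _ _ _ _).trans (max_le (by simp) le_rfl)

lemma EB.ext {c τ τ' a b a' b' : ℝ} {u : ℝ → ℝ → ℝ → ℝ} {K0 Kt Kx Ky : ℝ}
    (hKx : 0 ≤ Kx) (hKy : 0 ≤ Ky)
    (hτ : τ < τ') (ha : a < b) (hb : a' < b') (h : EB c τ τ' a b a' b' u K0 Kt Kx Ky) :
    ∃ g, GX (Dset c τ τ' a b a' b') g K0 Kt Kx Ky ∧
      ∀ p ∈ PsetT (Icc τ τ') a b a' b', g p.1 p.2.1 p.2.2 = u p.1 p.2.1 p.2.2 := by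
  have he : ∀ p ∈ PsetT (Icc τ τ') a b a' b', u (cl τ τ' p.1) (cl a b p.2.1) (cl a' b' p.2.2)
      = u p.1 p.2.1 p.2.2 := by
    rintro ⟨t, x, y⟩ ⟨ht, hx, hy⟩
    dsimp only at *
    rw [cl_eq ht, cl_eq hx, cl_eq hy]
  refine ⟨fun t x y => u (cl τ τ' t) (cl a b x) (cl a' b' y), ⟨?_, ?_, ?_, ?_, ?_⟩, he⟩
  · refine ContinuousOn.comp_continuous (f := fun p : ℝ × ℝ × ℝ => (cl τ τ' p.1, cl a b p.2.1, cl a' b' p.2.2)) h.cont ?_ ?_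
    · unfold cl; fun_prop
    · exact fun p => ⟨cl_mem hτ.le _, cl_mem ha.le _, cl_mem hb.le _⟩
  · exact fun t x y => h.bd (_, _, _) ⟨cl_mem hτ.le _, cl_mem ha.le _, cl_mem hb.le _⟩
  · intro t x x' y
    refine (h.lip_x hτ hb (cl_mem hτ.le _) (cl_mem ha.le _) (cl_mem ha.le _) (cl_mem hb.le _)).trans ?_
    exact mul_le_mul_of_nonneg_left (cl_lip _ _ _ _) (by assumption)
  · intro t x y y'
    refine (h.lip_y hτ ha (cl_mem hτ.le _) (cl_mem ha.le _) (cl_mem hb.le _) (cl_mem hb.le _)).trans ?_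
    exact mul_le_mul_of_nonneg_left (cl_lip _ _ _ _) (by assumption)
  · refine h.reg.congr (isOpen_Dset _ _ _ _ _ _ _) fun p hp => he p ?_
    exact ⟨Ioo_subset_Icc_self hp.1.1, Ioo_subset_Icc_self hp.1.2.1, Ioo_subset_Icc_self hp.1.2.2⟩

lemma abs_deriv_le_of_lip {f : ℝ → ℝ} {K : ℝ} (hK : 0 ≤ K)
    (h : ∀ x x', |f x - f x'| ≤ K * |x - x'|) (x : ℝ) : |deriv f x| ≤ K := by
  have : LipschitzWith ⟨K, hK⟩ f := LipschitzWith.of_dist_le_mul fun x x' => h x x'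
  exact norm_deriv_le_of_lipschitz this

section
variable {D : Set (ℝ × ℝ × ℝ)} {g : ℝ → ℝ → ℝ → ℝ} {K0 Kt Kx Ky : ℝ}

lemma GX.meas_x (hg : GX D g K0 Kt Kx Ky) (c t x y : ℝ) :
    Measurable (fun s => pdxF g s (x + c * (s - t)) y) := by
  have h1 : Continuous (Function.uncurry (fun s ξ : ℝ => g s ξ y)) :=
    hg.cont.comp (f := fun q : ℝ × ℝ => (q.1, q.2, y)) (by fun_prop)
  have h2 := measurable_deriv_with_param h1
  exact h2.comp (g := fun q : ℝ × ℝ => deriv ((fun s ξ : ℝ => g s ξ y) q.1) q.2)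
    (f := fun s : ℝ => (s, x + c * (s - t))) (by fun_prop)

lemma GX.meas_y (hg : GX D g K0 Kt Kx Ky) (c t x y : ℝ) :
    Measurable (fun s => pdyF g s (x + c * (s - t)) y) := by
  have h1 : Continuous (Function.uncurry (fun s η : ℝ => g s (x + c * (s - t)) η)) :=
    hg.cont.comp (f := fun q : ℝ × ℝ => (q.1, x + c * (q.1 - t), q.2)) (by fun_prop)
  have h2 := measurable_deriv_with_param h1
  exact h2.comp (g := fun q : ℝ × ℝ => deriv ((fun s η : ℝ => g s (x + c * (s - t)) η) q.1) q.2)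
    (f := fun s : ℝ => (s, y)) (by fun_prop)

lemma core_int (hD : IsOpen D) (hg : GX D g K0 Kt Kx Ky) (hKx : 0 ≤ Kx) (hKy : 0 ≤ Ky)
    {c : ℝ} (hc : 0 < c) {Δ : ℝ} (α0 αt αx : ℝ) {O : Set (ℝ × ℝ × ℝ)}
    (hΔ : ∀ p ∈ O, |p.1 - (α0 + αt * p.1 + αx * p.2.1)| ≤ Δ)
    (hO : ∀ p ∈ O, ∀ᵐ s, s ∈ uIoc (α0 + αt * p.1 + αx * p.2.1) p.1 →
      (s, p.2.1 + c * (s - p.1), p.2.2) ∈ D) :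
    D1 O (fun t x y => ∫ s in (α0 + αt * t + αx * x)..t, g s (x + c * (s - t)) y)
      (K0 * (1 + |αt|) + c * Kx * Δ) (K0 * |αx| + Kx * Δ) (Ky * Δ) := by
  have std := hg.reg.std
  set α : ℝ × ℝ × ℝ → ℝ := fun p => α0 + αt * p.1 + αx * p.2.1 with hα
  have hαc : Continuous α := by fun_prop
  -- bounds on derivatives
  have bX : ∀ t x y, |pdxF g t x y| ≤ Kx := fun t x y =>
    abs_deriv_le_of_lip hKx (fun x x' => hg.lipx t x x' y) x
  have bY : ∀ t x y, |pdyF g t x y| ≤ Ky := fun t x y =>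
    abs_deriv_le_of_lip hKy (fun y y' => hg.lipy t x y y') y
  set IX : ℝ × ℝ × ℝ → ℝ := fun p => ∫ s in α p..p.1, pdxF g s (p.2.1 + c * (s - p.1)) p.2.2
  set IY : ℝ × ℝ × ℝ → ℝ := fun p => ∫ s in α p..p.1, pdyF g s (p.2.1 + c * (s - p.1)) p.2.2
  have cX : ContinuousOn IX O := by
    intro p hp
    refine (cont_int (G := fun (p : ℝ × ℝ × ℝ) s => pdxF g s (p.2.1 + c * (s - p.1)) p.2.2)
      (fun p => hg.meas_x c _ _ _) (fun p s => bX _ _ _) hαc.continuousAt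
      continuous_fst.continuousAt ?_).continuousWithinAt
    filter_upwards [hO p hp] with s hs hs2
    have := std.2.1.2.1.continuousAt (hD.mem_nhds (hs hs2))
    exact this.comp (f := fun p : ℝ × ℝ × ℝ => (s, p.2.1 + c * (s - p.1), p.2.2)) (by fun_prop)
  have cY : ContinuousOn IY O := by
    intro p hp
    refine (cont_int (G := fun (p : ℝ × ℝ × ℝ) s => pdyF g s (p.2.1 + c * (s - p.1)) p.2.2)
      (fun p => hg.meas_y c _ _ _) (fun p s => bY _ _ _) hαc.continuousAt
      continuous_fst.continuousAt ?_).continuousWithinAt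
    filter_upwards [hO p hp] with s hs hs2
    have := std.2.1.2.2.continuousAt (hD.mem_nhds (hs hs2))
    exact this.comp (f := fun p : ℝ × ℝ × ℝ => (s, p.2.1 + c * (s - p.1), p.2.2)) (by fun_prop)
  have bIX : ∀ p ∈ O, |IX p| ≤ Kx * Δ := by
    intro p hp
    have h1 := intervalIntegral.norm_integral_le_of_norm_le_const (a := α p) (b := p.1)
      (C := Kx) (f := fun s => pdxF g s (p.2.1 + c * (s - p.1)) p.2.2) (fun s _ => bX _ _ _)
    exact h1.trans (mul_le_mul_of_nonneg_left (hΔ p hp) hKx)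
  have bIY : ∀ p ∈ O, |IY p| ≤ Ky * Δ := by
    intro p hp
    have h1 := intervalIntegral.norm_integral_le_of_norm_le_const (a := α p) (b := p.1)
      (C := Ky) (f := fun s => pdyF g s (p.2.1 + c * (s - p.1)) p.2.2) (fun s _ => bY _ _ _)
    exact h1.trans (mul_le_mul_of_nonneg_left (hΔ p hp) hKy)
  -- the foot value
  set ft : ℝ × ℝ × ℝ → ℝ := fun p => g (α p) (p.2.1 + c * (α p - p.1)) p.2.2
  have cft : Continuous ft :=
    hg.cont.comp (f := fun p : ℝ × ℝ × ℝ => (α p, p.2.1 + c * (α p - p.1), p.2.2)) (by fun_prop)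
  have cline : ∀ t x y, Continuous (fun s => g s (x + c * (s - t)) y) := fun t x y =>
    hg.cont.comp (f := fun s : ℝ => (s, x + c * (s - t), y)) (by fun_prop)
  refine ⟨fun p => IX p * (-c) + g p.1 p.2.1 p.2.2 * 1 - ft p * αt,
    fun p => IX p + g p.1 p.2.1 p.2.2 * 0 - ft p * αx,
    fun p => IY p + g p.1 p.2.1 p.2.2 * 0 - ft p * 0, ?_, ⟨?_, ?_, ?_⟩, ?_⟩
  · rintro ⟨t, x, y⟩ hp
    have hOp := hO _ hp
    dsimp only at hOp ⊢
    refine ⟨?_, ?_, ?_⟩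
    · have := leib (f := fun h s => g s (x + c * (s - h)) y) (L := c * Kx)
        (α := fun h => α0 + αt * h + αx * x) (β := fun h => h) (h0 := t) (α' := αt) (β' := 1)
        (f' := fun s => pdxF g s (x + c * (s - t)) y * (-c))
        (fun h => cline _ _ _) ?_ ?_ (hasDerivAt_id t) ((hg.meas_x _ _ _ _).mul_const _) ?_
      · convert! this using 1
        simp only [intervalIntegral.integral_mul_const, IX, ft, α, sub_self, mul_zero, add_zero]
      · intro h h' s
        refine (hg.lipx _ _ _ _).trans (le_of_eq ?_)
        rw [show x + c * (s - h) - (x + c * (s - h')) = c * (h' - h) by ring, abs_mul,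
          abs_of_pos hc, abs_sub_comm]
        ring
      · simpa using (((hasDerivAt_id t).const_mul αt).const_add α0).add_const (αx * x)
      · filter_upwards [hOp] with s hs hs2
        have h1 : HasDerivAt (fun ξ => g s ξ y) (pdxF g s (x + c * (s - t)) y) (x + c * (s - t)) :=
          (std.1 _ (hs hs2)).2.1.hasDerivAt
        have h2 : HasDerivAt (fun h => x + c * (s - h)) (-c) t := by
          simpa using (((hasDerivAt_id t).const_sub s).const_mul c).const_add x
        exact HasDerivAt.comp t h1 h2
    · have := leib (f := fun h s => g s (h + c * (s - t)) y) (L := Kx)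
        (α := fun h => α0 + αt * t + αx * h) (β := fun h => t) (h0 := x) (α' := αx) (β' := 0)
        (f' := fun s => pdxF g s (x + c * (s - t)) y)
        (fun h => cline _ _ _) ?_ ?_ (hasDerivAt_const x t) (hg.meas_x _ _ _ _) ?_
      · convert! this using 1
        simp only [IX, ft, α, sub_self, mul_zero, add_zero]
      · intro h h' s
        refine (hg.lipx _ _ _ _).trans (le_of_eq ?_)
        rw [show h + c * (s - t) - (h' + c * (s - t)) = h - h' by ring]
      · simpa using ((hasDerivAt_id x).const_mul αx).const_add (α0 + αt * t)
      · filter_upwards [hOp] with s hs hs2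
        have h1 : HasDerivAt (fun ξ => g s ξ y) (pdxF g s (x + c * (s - t)) y) (x + c * (s - t)) :=
          (std.1 _ (hs hs2)).2.1.hasDerivAt
        exact HasDerivAt.comp_add_const x (c * (s - t)) h1
    · have := leib (f := fun h s => g s (x + c * (s - t)) h) (L := Ky)
        (α := fun h => α0 + αt * t + αx * x) (β := fun h => t) (h0 := y) (α' := 0) (β' := 0)
        (f' := fun s => pdyF g s (x + c * (s - t)) y)
        (fun h => cline _ _ _) ?_ (hasDerivAt_const y _) (hasDerivAt_const y t)
        (hg.meas_y _ _ _ _) ?_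
      · convert! this using 1
        simp only [IY, ft, α, sub_self, mul_zero, add_zero]
      · intro h h' s
        exact hg.lipy _ _ _ _
      · filter_upwards [hOp] with s hs hs2
        exact (std.1 _ (hs hs2)).2.2.hasDerivAt
  · exact ((cX.mul_const _).add (hg.cont.mul_const _).continuousOn).sub
      (cft.mul_const _).continuousOn
  · exact (cX.add (hg.cont.mul_const _).continuousOn).sub (cft.mul_const _).continuousOn
  · exact (cY.add (hg.cont.mul_const _).continuousOn).sub (cft.mul_const _).continuousOn
  · intro p hp
    have b1 := hg.bd p.1 p.2.1 p.2.2
    have b2 : |ft p| ≤ K0 := hg.bd _ _ _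
    have b3 := bIX p hp
    refine ⟨?_, ?_, ?_⟩
    · calc |IX p * (-c) + g p.1 p.2.1 p.2.2 * 1 - ft p * αt|
          ≤ |IX p * (-c)| + |g p.1 p.2.1 p.2.2 * 1| + |ft p * αt| :=
            (abs_sub _ _).trans (add_le_add_left (abs_add_le _ _) _)
        _ = |IX p| * c + |g p.1 p.2.1 p.2.2| + |ft p| * |αt| := by
            rw [abs_mul, abs_mul, abs_mul, abs_neg, abs_of_pos hc, abs_one, mul_one]
        _ ≤ (Kx * Δ) * c + K0 + K0 * |αt| := by gcongr
        _ = _ := by ring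
    · calc |IX p + g p.1 p.2.1 p.2.2 * 0 - ft p * αx|
          ≤ |IX p| + |ft p * αx| := by rw [mul_zero, add_zero]; exact abs_sub _ _
        _ = |IX p| + |ft p| * |αx| := by rw [abs_mul]
        _ ≤ Kx * Δ + K0 * |αx| := by gcongr
        _ = _ := by ring
    · simpa using bIY p hp

end

/-- generic component of the operator -/
def UU (c τ a : ℝ) (g nb bb : ℝ → ℝ → ℝ → ℝ) (t x y : ℝ) : ℝ :=
  if a ≤ x - c * (t - τ) then (∫ s in τ..t, g s (x + c * (s - t)) y) + nb t x y
  else (∫ s in (t - (x - a) / c)..t, g s (x + c * (s - t)) y) + bb t x y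

structure FR (A : Set (ℝ × ℝ × ℝ)) (u : ℝ → ℝ → ℝ → ℝ) (q : ℝ) : Prop where
  cont : Cont3 u A
  bd : ∀ p ∈ A, |u p.1 p.2.1 p.2.2| ≤ q
  reg : D1 A u q q q

lemma ae_good {c τ τ' a b a' b' : ℝ} (hc : 0 < c) {t x y l : ℝ}
    (hp : (t, x, y) ∈ Dset c τ τ' a b a' b') (hl : τ ≤ l) (hlt : l ≤ t)
    (hlx : a ≤ x + c * (l - t)) :
    ∀ᵐ s, s ∈ uIoc l t → (s, x + c * (s - t), y) ∈ Dset c τ τ' a b a' b' := by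
  have h1 : ∀ᵐ s : ℝ, s ∉ ({τ + (y - a') / c, τ + (b' - y) / c, (b - x + c * t + c * τ) / (2 * c)}
      : Set ℝ) :=
    compl_mem_ae_iff.2 ((by simp : Set.Finite _).measure_zero _)
  filter_upwards [h1] with s hs hs2
  rw [uIoc_of_le hlt] at hs2
  simp only [mem_insert_iff, mem_singleton_iff, not_or] at hs
  obtain ⟨⟨⟨ht1, ht2⟩, ⟨hx1, hx2⟩, hy⟩, o1, o2, o3, o4⟩ := hp
  dsimp only at *
  have k1 : c * (l - t) < c * (s - t) := by
    apply mul_lt_mul_of_pos_left _ hc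
    linarith [hs2.1]
  have k2 : c * (s - t) ≤ 0 := by
    apply mul_nonpos_of_nonneg_of_nonpos hc.le
    linarith [hs2.2]
  refine ⟨⟨⟨hl.trans_lt hs2.1, hs2.2.trans_lt ht2⟩, ⟨?_, ?_⟩, hy⟩, ?_, ?_, ?_, ?_⟩ <;> dsimp only
  · linarith
  · linarith
  · intro he; apply o1; rw [← he]; ring
  · intro he; apply hs.1; field_simp; linarith
  · intro he; apply hs.2.1; field_simp; linarith
  · intro he; apply hs.2.2; field_simp; linarith

lemma core {c τ τ' a b a' b' : ℝ} (hc : 0 < c) (hτ : τ < τ') (ha : a < b) (hb : a' < b')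
    {g nb bb : ℝ → ℝ → ℝ → ℝ} {K0 K q : ℝ} (hK0 : 0 ≤ K0) (hK : 0 ≤ K)
    (hg : EB c τ τ' a b a' b' g K0 K K K)
    (hn : FR {p | p ∈ PsetT (Icc τ τ') a b a' b' ∧ a ≤ p.2.1 - c * (p.1 - τ)} nb q)
    (hbb : FR {p | p ∈ PsetT (Icc τ τ') a b a' b' ∧ p.2.1 - c * (p.1 - τ) ≤ a} bb q)
    (hcomp : ∀ p ∈ PsetT (Icc τ τ') a b a' b', p.2.1 - c * (p.1 - τ) = a →
      nb p.1 p.2.1 p.2.2 = bb p.1 p.2.1 p.2.2) :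
    EB c τ τ' a b a' b' (UU c τ a g nb bb) (K0 * (τ' - τ) + q)
      (2 * K0 + c * K * (τ' - τ) + q) (K0 / c + K * (τ' - τ) + q) (K * (τ' - τ) + q) := by
  obtain ⟨G, hG, hGe⟩ := hg.ext hK hK hτ ha hb
  set P := PsetT (Icc τ τ') a b a' b' with hP
  set D := Dset c τ τ' a b a' b' with hDd
  have hDP : D ⊆ P := fun p hp => ⟨Ioo_subset_Icc_self hp.1.1, Ioo_subset_Icc_self hp.1.2.1,
    Ioo_subset_Icc_self hp.1.2.2⟩
  have hDo : IsOpen D := isOpen_Dset _ _ _ _ _ _ _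
  have hfoot : ∀ t x : ℝ, c * ((t - (x - a) / c) - t) = a - x := by
    intro t x; field_simp; ring
  -- replacing `g` by `G` along characteristics
  have hInt : ∀ t x y l, (t, x, y) ∈ P → τ ≤ l → l ≤ t → a ≤ x + c * (l - t) →
      (∫ s in l..t, g s (x + c * (s - t)) y) = ∫ s in l..t, G s (x + c * (s - t)) y := by
    rintro t x y l ⟨ht, hx, hy⟩ hl hlt hlx
    refine intervalIntegral.integral_congr fun s hs => (hGe (s, x + c * (s - t), y) ?_).symm
    rw [uIcc_of_le hlt] at hs
    dsimp only at ht hx hy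
    have k1 : c * (l - t) ≤ c * (s - t) := by
      apply mul_le_mul_of_nonneg_left _ hc.le
      linarith [hs.1]
    have k2 : c * (s - t) ≤ 0 := by
      apply mul_nonpos_of_nonneg_of_nonpos hc.le
      linarith [hs.2]
    exact ⟨⟨hl.trans hs.1, hs.2.trans ht.2⟩, ⟨by dsimp only; linarith, by dsimp only; linarith [hx.2]⟩, hy⟩
  have hpos : ∀ t x y, (t, x, y) ∈ P → a ≤ x - c * (t - τ) →
      UU c τ a g nb bb t x y = (∫ s in τ..t, G s (x + c * (s - t)) y) + nb t x y := by
    intro t x y hp h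
    rw [UU, if_pos h, hInt t x y τ hp le_rfl hp.1.1]
    linarith
  have hle : ∀ t x, x - c * (t - τ) ≤ a → τ ≤ t - (x - a) / c := by
    intro t x h
    rw [le_sub_comm, div_le_iff₀ hc]; linarith
  have hle2 : ∀ t x, a ≤ x → t - (x - a) / c ≤ t := by
    intro t x h
    have : 0 ≤ (x - a) / c := div_nonneg (by linarith) hc.le
    linarith
  have hneg : ∀ t x y, (t, x, y) ∈ P → x - c * (t - τ) < a →
      UU c τ a g nb bb t x y =
        (∫ s in (t - (x - a) / c)..t, G s (x + c * (s - t)) y) + bb t x y := by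
    intro t x y hp h
    rw [UU, if_neg (not_le.2 h), hInt t x y _ hp (hle t x h.le) (hle2 t x hp.2.1.1)]
    rw [hfoot]; linarith
  set J : ℝ × ℝ × ℝ → ℝ := fun p => ∫ s in (max τ (p.1 - (p.2.1 - a) / c))..p.1,
    G s (p.2.1 + c * (s - p.1)) p.2.2 with hJ
  set dat : ℝ × ℝ × ℝ → ℝ := fun p => if a ≤ p.2.1 - c * (p.1 - τ) then nb p.1 p.2.1 p.2.2
    else bb p.1 p.2.1 p.2.2 with hdat
  have hUJ : ∀ p ∈ P, UU c τ a g nb bb p.1 p.2.1 p.2.2 = J p + dat p := by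
    rintro ⟨t, x, y⟩ hp
    by_cases h : a ≤ x - c * (t - τ)
    · have : max τ (t - (x - a) / c) = τ := by
        apply max_eq_left
        rw [sub_le_comm, le_div_iff₀ hc]; linarith
      simp only [hJ, hdat, if_pos h, this]
      exact hpos t x y hp h
    · have h' := not_le.1 h
      have : max τ (t - (x - a) / c) = t - (x - a) / c := max_eq_right (hle t x h'.le)
      simp only [hJ, hdat, if_neg h, this]
      exact hneg t x y hp h'
  have hdatb : ∀ p ∈ P, |dat p| ≤ q := by
    intro p hp
    by_cases h : a ≤ p.2.1 - c * (p.1 - τ)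
    · simp only [hdat, if_pos h]; exact hn.bd p ⟨hp, h⟩
    · simp only [hdat, if_neg h]; exact hbb.bd p ⟨hp, (not_le.1 h).le⟩
  refine ⟨?_, ?_, ?_⟩
  · have cJ : Continuous J := by
      rw [continuous_iff_continuousAt]
      intro p
      refine cont_int (G := fun (p : ℝ × ℝ × ℝ) s => G s (p.2.1 + c * (s - p.1)) p.2.2)
        (fun p => ?_) (fun p s => hG.bd _ _ _) (Continuous.continuousAt (by fun_prop))
        continuous_fst.continuousAt (Filter.Eventually.of_forall fun s _ => ?_)
      · exact (hG.cont.comp (f := fun s : ℝ => (s, p.2.1 + c * (s - p.1), p.2.2))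
          (by fun_prop)).measurable
      · exact (hG.cont.comp (f := fun p : ℝ × ℝ × ℝ => (s, p.2.1 + c * (s - p.1), p.2.2))
          (by fun_prop)).continuousAt
    have cdat : ContinuousOn dat P := by
      have hPc : IsClosed P := isClosed_Icc.prod (isClosed_Icc.prod isClosed_Icc)
      have e : P = {p | p ∈ P ∧ a ≤ p.2.1 - c * (p.1 - τ)} ∪
          {p | p ∈ P ∧ p.2.1 - c * (p.1 - τ) ≤ a} := by
        ext p
        constructor
        · intro hp
          rcases le_total a (p.2.1 - c * (p.1 - τ)) with h | h
          exacts [Or.inl ⟨hp, h⟩, Or.inr ⟨hp, h⟩]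
        · rintro (h | h)
          exacts [h.1, h.1]
      rw [e]
      refine ContinuousOn.union_of_isClosed (hn.cont.congr ?_) (hbb.cont.congr ?_) ?_ ?_
      · rintro p ⟨hp, h⟩
        simp only [hdat, if_pos h]
      · rintro p ⟨hp, h⟩
        by_cases h2 : a ≤ p.2.1 - c * (p.1 - τ)
        · simp only [hdat, if_pos h2]
          exact hcomp p hp (le_antisymm h h2)
        · simp only [hdat, if_neg h2]
      · exact hPc.inter (isClosed_le (f := fun _ : ℝ × ℝ × ℝ => a)
          (g := fun p : ℝ × ℝ × ℝ => p.2.1 - c * (p.1 - τ)) (by fun_prop) (by fun_prop))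
      · exact hPc.inter (isClosed_le (g := fun _ : ℝ × ℝ × ℝ => a)
          (f := fun p : ℝ × ℝ × ℝ => p.2.1 - c * (p.1 - τ)) (by fun_prop) (by fun_prop))
    exact (cJ.continuousOn.add cdat).congr hUJ
  · intro p hp
    rw [hUJ p hp]
    refine (abs_add_le _ _).trans (add_le_add ?_ (hdatb p hp))
    have h1 := intervalIntegral.norm_integral_le_of_norm_le_const
      (a := max τ (p.1 - (p.2.1 - a) / c)) (b := p.1)
      (C := K0) (f := fun s => G s (p.2.1 + c * (s - p.1)) p.2.2) (fun s _ => hG.bd _ _ _)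
    refine h1.trans (mul_le_mul_of_nonneg_left ?_ hK0)
    have h2 : max τ (p.1 - (p.2.1 - a) / c) ≤ p.1 := max_le hp.1.1 (hle2 _ _ hp.2.1.1)
    have h3 := le_max_left τ (p.1 - (p.2.1 - a) / c)
    rw [abs_of_nonneg (by linarith)]
    linarith [hp.1.2]
  · have hc' : 0 ≤ K0 / c := div_nonneg hK0 hc.le
    have hop : IsOpen (D ∩ {p | a < p.2.1 - c * (p.1 - τ)}) :=
      hDo.inter (isOpen_lt (by fun_prop) (by fun_prop))
    have hon : IsOpen (D ∩ {p | p.2.1 - c * (p.1 - τ) < a}) :=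
      hDo.inter (isOpen_lt (by fun_prop) (by fun_prop))
    have e : D = (D ∩ {p | a < p.2.1 - c * (p.1 - τ)}) ∪
        (D ∩ {p | p.2.1 - c * (p.1 - τ) < a}) := by
      ext p
      constructor
      · intro hp
        rcases lt_or_gt_of_ne hp.2.1 with h | h
        exacts [Or.inr ⟨hp, h⟩, Or.inl ⟨hp, h⟩]
      · rintro (h | h)
        exacts [h.1, h.1]
    rw [← hDd, e]
    refine D1.union hop hon ?_ ?_
    · have h1 := core_int hDo hG hK hK hc (Δ := τ' - τ) τ 0 0
        (O := D ∩ {p | a < p.2.1 - c * (p.1 - τ)}) ?_ ?_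
      · have h2 := hn.reg.mono (B := D ∩ {p | a < p.2.1 - c * (p.1 - τ)})
          (fun p hp => ⟨hDP hp.1, le_of_lt hp.2⟩) le_rfl le_rfl le_rfl
        refine (((h1.add h2).congr hop) ?_).mono Subset.rfl ?_ ?_ le_rfl
        · rintro ⟨t, x, y⟩ ⟨hp, h⟩
          simp only [zero_mul, add_zero]
          exact hpos t x y (hDP hp) (le_of_lt h)
        · simp only [abs_zero]; linarith
        · simp only [abs_zero]; linarith
      · rintro ⟨t, x, y⟩ ⟨hp, h⟩
        have := (hDP hp).1
        simp only [zero_mul, add_zero]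
        rw [abs_of_nonneg (by linarith [this.1])]
        linarith [this.2]
      · rintro ⟨t, x, y⟩ ⟨hp, h⟩
        simp only [zero_mul, add_zero]
        have h : a < x - c * (t - τ) := h
        exact ae_good hc hp le_rfl (hDP hp).1.1 (by linarith)
    · have el : ∀ t x : ℝ, a / c + 1 * t + (-1 / c) * x = t - (x - a) / c := by
        intro t x; field_simp; ring
      have h1 := core_int hDo hG hK hK hc (Δ := τ' - τ) (a / c) 1 (-1 / c)
        (O := D ∩ {p | p.2.1 - c * (p.1 - τ) < a}) ?_ ?_
      · have h2 := hbb.reg.mono (B := D ∩ {p | p.2.1 - c * (p.1 - τ) < a})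
          (fun p hp => ⟨hDP hp.1, le_of_lt hp.2⟩) le_rfl le_rfl le_rfl
        refine (((h1.add h2).congr hon) ?_).mono Subset.rfl ?_ ?_ le_rfl
        · rintro ⟨t, x, y⟩ ⟨hp, h⟩
          simp only [el]
          exact hneg t x y (hDP hp) h
        · simp only [abs_one]; linarith
        · rw [abs_div, abs_neg, abs_one, abs_of_pos hc, mul_one_div]
      · rintro ⟨t, x, y⟩ ⟨hp, h⟩
        have h3 := (hDP hp).1
        have h4 := hle t x (le_of_lt h)
        have h5 := hle2 t x (hDP hp).2.1.1
        simp only [el]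
        dsimp only at h3
        rw [abs_of_nonneg (by linarith)]
        linarith [h3.2]
      · rintro ⟨t, x, y⟩ ⟨hp, h⟩
        simp only [el]
        refine ae_good hc hp (hle t x (le_of_lt h)) (hle2 t x (hDP hp).2.1.1) ?_
        rw [hfoot]; linarith

lemma Cont3.swap {A : Set (ℝ × ℝ × ℝ)} {u : ℝ → ℝ → ℝ → ℝ} (h : Cont3 u A) :
    Cont3 (fun t x y => u t y x) {p | (p.1, p.2.2, p.2.1) ∈ A} :=
  ContinuousOn.comp (f := fun p : ℝ × ℝ × ℝ => (p.1, p.2.2, p.2.1)) h (by fun_prop)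
    (fun _ hp => hp)

lemma Cont3.neg {A : Set (ℝ × ℝ × ℝ)} {u : ℝ → ℝ → ℝ → ℝ} (h : Cont3 u A) :
    Cont3 (fun t x y => u t (-x) y) {p | (p.1, -p.2.1, p.2.2) ∈ A} :=
  ContinuousOn.comp (f := fun p : ℝ × ℝ × ℝ => (p.1, -p.2.1, p.2.2)) h (by fun_prop)
    (fun _ hp => hp)

lemma D1.swap {A : Set (ℝ × ℝ × ℝ)} {u : ℝ → ℝ → ℝ → ℝ} {Kt Kx Ky : ℝ}
    (h : D1 A u Kt Kx Ky) :
    D1 {p | (p.1, p.2.2, p.2.1) ∈ A} (fun t x y => u t y x) Kt Ky Kx := by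
  obtain ⟨dt, dx, dy, h1, ⟨c1, c2, c3⟩, h3⟩ := h
  refine ⟨fun p => dt (p.1, p.2.2, p.2.1), fun p => dy (p.1, p.2.2, p.2.1),
    fun p => dx (p.1, p.2.2, p.2.1), ?_, ⟨?_, ?_, ?_⟩, ?_⟩
  · intro p hp
    obtain ⟨e1, e2, e3⟩ := h1 _ hp
    exact ⟨e1, e3, e2⟩
  · exact c1.comp (by fun_prop) (fun _ hp => hp)
  · exact c3.comp (by fun_prop) (fun _ hp => hp)
  · exact c2.comp (by fun_prop) (fun _ hp => hp)
  · intro p hp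
    obtain ⟨e1, e2, e3⟩ := h3 _ hp
    exact ⟨e1, e3, e2⟩

lemma D1.neg {A : Set (ℝ × ℝ × ℝ)} {u : ℝ → ℝ → ℝ → ℝ} {Kt Kx Ky : ℝ}
    (h : D1 A u Kt Kx Ky) :
    D1 {p | (p.1, -p.2.1, p.2.2) ∈ A} (fun t x y => u t (-x) y) Kt Kx Ky := by
  obtain ⟨dt, dx, dy, h1, ⟨c1, c2, c3⟩, h3⟩ := h
  refine ⟨fun p => dt (p.1, -p.2.1, p.2.2), fun p => -dx (p.1, -p.2.1, p.2.2),
    fun p => dy (p.1, -p.2.1, p.2.2), ?_, ⟨?_, ?_, ?_⟩, ?_⟩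
  · intro p hp
    obtain ⟨e1, e2, e3⟩ := h1 _ hp
    refine ⟨e1, ?_, e3⟩
    have := HasDerivAt.comp (h := fun s : ℝ => -s) p.2.1 e2 (hasDerivAt_neg p.2.1)
    simpa [Function.comp_def] using this
  · exact c1.comp (by fun_prop) (fun _ hp => hp)
  · exact (c2.comp (f := fun p : ℝ × ℝ × ℝ => (p.1, -p.2.1, p.2.2)) (by fun_prop)
      (fun _ hp => hp)).neg
  · exact c3.comp (by fun_prop) (fun _ hp => hp)
  · intro p hp
    obtain ⟨e1, e2, e3⟩ := h3 _ hp
    exact ⟨e1, by rw [abs_neg]; exact e2, e3⟩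

lemma D1.smulneg {A : Set (ℝ × ℝ × ℝ)} {u : ℝ → ℝ → ℝ → ℝ} {Kt Kx Ky : ℝ}
    (h : D1 A u Kt Kx Ky) : D1 A (fun t x y => -u t x y) Kt Kx Ky := by
  obtain ⟨dt, dx, dy, h1, ⟨c1, c2, c3⟩, h3⟩ := h
  refine ⟨fun p => -dt p, fun p => -dx p, fun p => -dy p, ?_, ⟨c1.neg, c2.neg, c3.neg⟩, ?_⟩
  · intro p hp
    obtain ⟨e1, e2, e3⟩ := h1 _ hp
    exact ⟨e1.neg, e2.neg, e3.neg⟩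
  · intro p hp
    simpa only [abs_neg] using h3 p hp

lemma FR.swap {A : Set (ℝ × ℝ × ℝ)} {u : ℝ → ℝ → ℝ → ℝ} {q : ℝ} (h : FR A u q) :
    FR {p | (p.1, p.2.2, p.2.1) ∈ A} (fun t x y => u t y x) q :=
  ⟨h.cont.swap, fun _ hp => h.bd _ hp, h.reg.swap⟩

lemma FR.neg {A : Set (ℝ × ℝ × ℝ)} {u : ℝ → ℝ → ℝ → ℝ} {q : ℝ} (h : FR A u q) :
    FR {p | (p.1, -p.2.1, p.2.2) ∈ A} (fun t x y => u t (-x) y) q :=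
  ⟨h.cont.neg, fun _ hp => h.bd _ hp, h.reg.neg⟩

lemma FR.mono {A B : Set (ℝ × ℝ × ℝ)} {u : ℝ → ℝ → ℝ → ℝ} {q : ℝ} (h : FR A u q)
    (hBA : B ⊆ A) : FR B u q :=
  ⟨ContinuousOn.mono h.cont hBA, fun _ hp => h.bd _ (hBA hp), h.reg.mono hBA le_rfl le_rfl le_rfl⟩

lemma EB.swap {c τ τ' a b a' b' : ℝ} {u : ℝ → ℝ → ℝ → ℝ} {K0 Kt Kx Ky : ℝ}
    (h : EB c τ τ' a b a' b' u K0 Kt Kx Ky) :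
    EB c τ τ' a' b' a b (fun t x y => u t y x) K0 Kt Ky Kx := by
  have e : ∀ p ∈ PsetT (Icc τ τ') a' b' a b, (p.1, p.2.2, p.2.1) ∈ PsetT (Icc τ τ') a b a' b' :=
    fun p hp => ⟨hp.1, hp.2.2, hp.2.1⟩
  refine ⟨ContinuousOn.mono h.cont.swap e, fun p hp => h.bd _ (e p hp),
    h.reg.swap.mono ?_ le_rfl le_rfl le_rfl⟩
  rintro p ⟨hp, o1, o2, o3, o4⟩
  exact ⟨⟨hp.1, hp.2.2, hp.2.1⟩, o2, o1, o4, o3⟩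

lemma EB.neg {c τ τ' a b a' b' : ℝ} {u : ℝ → ℝ → ℝ → ℝ} {K0 Kt Kx Ky : ℝ}
    (h : EB c τ τ' a b a' b' u K0 Kt Kx Ky) :
    EB c τ τ' (-b) (-a) a' b' (fun t x y => u t (-x) y) K0 Kt Kx Ky := by
  have e : ∀ p ∈ PsetT (Icc τ τ') (-b) (-a) a' b',
      (p.1, -p.2.1, p.2.2) ∈ PsetT (Icc τ τ') a b a' b' :=
    fun p hp => ⟨hp.1, ⟨by linarith [hp.2.1.2], by linarith [hp.2.1.1]⟩, hp.2.2⟩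
  refine ⟨ContinuousOn.mono h.cont.neg e, fun p hp => h.bd _ (e p hp),
    h.reg.neg.mono ?_ le_rfl le_rfl le_rfl⟩
  rintro p ⟨hp, o1, o2, o3, o4⟩
  refine ⟨⟨hp.1, ⟨by linarith [hp.2.1.2], by linarith [hp.2.1.1]⟩, hp.2.2⟩, ?_, o2, o3, ?_⟩
  · dsimp only; intro he; apply o4; linarith
  · dsimp only; intro he; apply o1; linarith

lemma EB.smulneg {c τ τ' a b a' b' : ℝ} {u : ℝ → ℝ → ℝ → ℝ} {K0 Kt Kx Ky : ℝ}
    (h : EB c τ τ' a b a' b' u K0 Kt Kx Ky) :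
    EB c τ τ' a b a' b' (fun t x y => -u t x y) K0 Kt Kx Ky :=
  ⟨ContinuousOn.neg h.cont, fun p hp => by rw [abs_neg]; exact h.bd p hp, h.reg.smulneg⟩

/-- generic component of the operator for the left-moving particles -/
def UL (c τ b : ℝ) (g nb bb : ℝ → ℝ → ℝ → ℝ) (t x y : ℝ) : ℝ :=
  if x + c * (t - τ) ≤ b then (∫ s in τ..t, g s (x - c * (s - t)) y) + nb t x y
  else (∫ s in (t - (b - x) / c)..t, g s (x - c * (s - t)) y) + bb t x y

lemma coreL {c τ τ' a b a' b' : ℝ} (hc : 0 < c) (hτ : τ < τ') (ha : a < b) (hb : a' < b')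
    {g nb bb : ℝ → ℝ → ℝ → ℝ} {K0 K q : ℝ} (hK0 : 0 ≤ K0) (hK : 0 ≤ K)
    (hg : EB c τ τ' a b a' b' g K0 K K K)
    (hn : FR {p | p ∈ PsetT (Icc τ τ') a b a' b' ∧ p.2.1 + c * (p.1 - τ) ≤ b} nb q)
    (hbb : FR {p | p ∈ PsetT (Icc τ τ') a b a' b' ∧ b ≤ p.2.1 + c * (p.1 - τ)} bb q)
    (hcomp : ∀ p ∈ PsetT (Icc τ τ') a b a' b', p.2.1 + c * (p.1 - τ) = b →
      nb p.1 p.2.1 p.2.2 = bb p.1 p.2.1 p.2.2) :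
    EB c τ τ' a b a' b' (UL c τ b g nb bb) (K0 * (τ' - τ) + q)
      (2 * K0 + c * K * (τ' - τ) + q) (K0 / c + K * (τ' - τ) + q) (K * (τ' - τ) + q) := by
  have e : ∀ p ∈ PsetT (Icc τ τ') (-b) (-a) a' b',
      (p.1, -p.2.1, p.2.2) ∈ PsetT (Icc τ τ') a b a' b' :=
    fun p hp => ⟨hp.1, ⟨by linarith [hp.2.1.2], by linarith [hp.2.1.1]⟩, hp.2.2⟩
  have h := core hc hτ (neg_lt_neg ha) hb hK0 hK hg.neg
    (hn.neg.mono (fun p hp => ⟨e p hp.1, by dsimp only; linarith [hp.2]⟩))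
    (hbb.neg.mono (fun p hp => ⟨e p hp.1, by dsimp only; linarith [hp.2]⟩))
    (fun p hp h => hcomp _ (e p hp) (by dsimp only; linarith))
  have h2 := h.neg
  rw [neg_neg, neg_neg] at h2
  convert! h2 using 1
  funext t x y
  have e1 : (-b ≤ -x - c * (t - τ)) ↔ (x + c * (t - τ) ≤ b) := by
    constructor <;> intro h <;> linarith
  have e2 : ∀ s, -(-x + c * (s - t)) = x - c * (s - t) := fun s => by ring
  have e3 : t - (-x - -b) / c = t - (b - x) / c := by ring
  simp only [UL, UU, e1, e2, e3, neg_neg]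

lemma QQ_EB {c S τ τ' a b a' b' R : ℝ} (hc : 0 < c) (hS : 0 < S) (hR : 0 ≤ R)
    {M : Fin 4 → ℝ → ℝ → ℝ → ℝ} (h : ∀ i, EB c τ τ' a b a' b' (M i) R R R R) :
    EB c τ τ' a b a' b' (QQ c S M) (4 * c * S * R ^ 2) (8 * c * S * R ^ 2) (8 * c * S * R ^ 2)
      (8 * c * S * R ^ 2) := by
  have hcS : 0 < c * S := mul_pos hc hS
  have key : ∀ a b a' b' : ℝ, |a| ≤ R → |b| ≤ R → |a'| ≤ R → |b'| ≤ R →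
      |a * b - a' * b'| ≤ 2 * R ^ 2 := by
    intro a b a' b' h1 h2 h3 h4
    refine (abs_sub _ _).trans ?_
    rw [abs_mul, abs_mul]
    have k1 := mul_le_mul h1 h2 (abs_nonneg _) hR
    have k2 := mul_le_mul h3 h4 (abs_nonneg _) hR
    linarith
  have key2 : ∀ z : ℝ, ∀ n : ℝ, |z| ≤ n * R ^ 2 → |2 * c * S * z| ≤ (2 * n) * c * S * R ^ 2 := by
    intro z n hz
    rw [abs_mul, abs_of_pos (by positivity)]
    have := mul_le_mul_of_nonneg_left hz (show 0 ≤ 2 * c * S by positivity)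
    linarith
  have key3 : ∀ a b a' b' d e d' e' : ℝ, |a| ≤ R → |b| ≤ R → |a'| ≤ R → |b'| ≤ R →
      |d| ≤ R → |e| ≤ R → |d'| ≤ R → |e'| ≤ R →
      |2 * c * S * ((d * b + a * e) - (d' * b' + a' * e'))| ≤ 8 * c * S * R ^ 2 := by
    intro a b a' b' d e d' e' h1 h2 h3 h4 h5 h6 h7 h8
    have k := key2 ((d * b + a * e) - (d' * b' + a' * e')) 4 (by
      have k1 := key d b d' b' h5 h2 h7 h4
      have k2 := key a e a' e' h1 h6 h3 h8
      have k3 := abs_add_le (d * b - d' * b') (a * e - a' * e')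
      have : (d * b + a * e) - (d' * b' + a' * e') = (d * b - d' * b') + (a * e - a' * e') := by ring
      rw [this]; linarith)
    linarith
  have hDP : Dset c τ τ' a b a' b' ⊆ PsetT (Icc τ τ') a b a' b' :=
    fun p hp => ⟨Ioo_subset_Icc_self hp.1.1, Ioo_subset_Icc_self hp.1.2.1,
    Ioo_subset_Icc_self hp.1.2.2⟩
  refine ⟨?_, ?_, ?_⟩
  · have h0 := (h 0).cont
    have h1 := (h 1).cont
    have h2 := (h 2).cont
    have h3 := (h 3).cont
    unfold Cont3 QQ at *
    exact continuousOn_const.mul ((h1.mul h2).sub (h0.mul h3))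
  · intro p hp
    have := key2 _ 2 (key _ _ _ _ ((h 1).bd p hp) ((h 2).bd p hp) ((h 0).bd p hp) ((h 3).bd p hp))
    unfold QQ
    linarith
  · have hd : ∀ i, ContinuousOn (fun p : ℝ × ℝ × ℝ => M i p.1 p.2.1 p.2.2)
        (Dset c τ τ' a b a' b') := fun i => ContinuousOn.mono (h i).cont hDP
    choose dt dx dy k1 k2 k3 using fun i => (h i).reg
    refine ⟨fun p => 2 * c * S * ((dt 1 p * M 2 p.1 p.2.1 p.2.2 + M 1 p.1 p.2.1 p.2.2 * dt 2 p)
        - (dt 0 p * M 3 p.1 p.2.1 p.2.2 + M 0 p.1 p.2.1 p.2.2 * dt 3 p)),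
      fun p => 2 * c * S * ((dx 1 p * M 2 p.1 p.2.1 p.2.2 + M 1 p.1 p.2.1 p.2.2 * dx 2 p)
        - (dx 0 p * M 3 p.1 p.2.1 p.2.2 + M 0 p.1 p.2.1 p.2.2 * dx 3 p)),
      fun p => 2 * c * S * ((dy 1 p * M 2 p.1 p.2.1 p.2.2 + M 1 p.1 p.2.1 p.2.2 * dy 2 p)
        - (dy 0 p * M 3 p.1 p.2.1 p.2.2 + M 0 p.1 p.2.1 p.2.2 * dy 3 p)), ?_, ⟨?_, ?_, ?_⟩, ?_⟩
    · intro p hp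
      exact ⟨(((k1 1 p hp).1.mul (k1 2 p hp).1).sub ((k1 0 p hp).1.mul (k1 3 p hp).1)).const_mul _,
        (((k1 1 p hp).2.1.mul (k1 2 p hp).2.1).sub
          ((k1 0 p hp).2.1.mul (k1 3 p hp).2.1)).const_mul _,
        (((k1 1 p hp).2.2.mul (k1 2 p hp).2.2).sub
          ((k1 0 p hp).2.2.mul (k1 3 p hp).2.2)).const_mul _⟩
    · exact continuousOn_const.mul ((((k2 1).1.mul (hd 2)).add ((hd 1).mul (k2 2).1)).sub
        (((k2 0).1.mul (hd 3)).add ((hd 0).mul (k2 3).1)))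
    · exact continuousOn_const.mul ((((k2 1).2.1.mul (hd 2)).add ((hd 1).mul (k2 2).2.1)).sub
        (((k2 0).2.1.mul (hd 3)).add ((hd 0).mul (k2 3).2.1)))
    · exact continuousOn_const.mul ((((k2 1).2.2.mul (hd 2)).add ((hd 1).mul (k2 2).2.2)).sub
        (((k2 0).2.2.mul (hd 3)).add ((hd 0).mul (k2 3).2.2)))
    · intro p hp
      have b : ∀ i, |M i p.1 p.2.1 p.2.2| ≤ R := fun i => (h i).bd p (hDP hp)
      exact ⟨key3 _ _ _ _ _ _ _ _ (b 1) (b 2) (b 0) (b 3) (k3 1 p hp).1 (k3 2 p hp).1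
          (k3 0 p hp).1 (k3 3 p hp).1,
        key3 _ _ _ _ _ _ _ _ (b 1) (b 2) (b 0) (b 3) (k3 1 p hp).2.1 (k3 2 p hp).2.1
          (k3 0 p hp).2.1 (k3 3 p hp).2.1,
        key3 _ _ _ _ _ _ _ _ (b 1) (b 2) (b 0) (b 3) (k3 1 p hp).2.2 (k3 2 p hp).2.2
          (k3 0 p hp).2.2 (k3 3 p hp).2.2⟩

lemma Smooth2.swap {D : Set (ℝ × ℝ)} {f : ℝ → ℝ → ℝ} (h : Smooth2 D f) :
    Smooth2 {p | (p.2, p.1) ∈ D} (fun a b => f b a) := by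
  obtain ⟨h1, h2, h3, h4, C, h5⟩ := h
  have hs : ContinuousOn (fun p : ℝ × ℝ => (p.2, p.1)) {p | (p.2, p.1) ∈ D} := by fun_prop
  refine ⟨h1.comp hs (fun _ hp => hp), fun p hp => ⟨(h2 _ hp).2, (h2 _ hp).1⟩,
    h4.comp hs (fun _ hp => hp), h3.comp hs (fun _ hp => hp), C, fun p hp => ?_⟩
  obtain ⟨k1, k2, k3⟩ := h5 _ hp
  exact ⟨k1, k3, k2⟩

lemma FR_aff {D : Set (ℝ × ℝ)} {f : ℝ → ℝ → ℝ} (h : Smooth2 D f) (α β γ : ℝ) :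
    ∃ K, FR {p | (α + β * p.1 + γ * p.2.1, p.2.2) ∈ D}
      (fun t x y => f (α + β * t + γ * x) y) K := by
  obtain ⟨h1, h2, h3, h4, C, h5⟩ := h
  set A : Set (ℝ × ℝ × ℝ) := {p | (α + β * p.1 + γ * p.2.1, p.2.2) ∈ D} with hA
  have hs : ContinuousOn (fun p : ℝ × ℝ × ℝ => (α + β * p.1 + γ * p.2.1, p.2.2)) A := by fun_prop
  have hm : MapsTo (fun p : ℝ × ℝ × ℝ => (α + β * p.1 + γ * p.2.1, p.2.2)) A D := fun _ hp => hp
  have hCC : ∀ p ∈ A, 0 ≤ C := fun p hp => (abs_nonneg _).trans (h5 _ hp).1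
  have i1 : ∀ p ∈ A, C ≤ (1 + |β| + |γ|) * C := fun p hp => by
    nlinarith [mul_nonneg (abs_nonneg β) (hCC p hp), mul_nonneg (abs_nonneg γ) (hCC p hp)]
  have i2 : ∀ p ∈ A, |β| * C ≤ (1 + |β| + |γ|) * C := fun p hp => by
    nlinarith [hCC p hp, mul_nonneg (abs_nonneg γ) (hCC p hp)]
  have i3 : ∀ p ∈ A, |γ| * C ≤ (1 + |β| + |γ|) * C := fun p hp => by
    nlinarith [hCC p hp, mul_nonneg (abs_nonneg β) (hCC p hp)]
  refine ⟨(1 + |β| + |γ|) * C, h1.comp hs hm, fun p hp => (h5 _ hp).1.trans (i1 p hp), ?_⟩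
  refine ⟨fun p => β * deriv (fun u => f u p.2.2) (α + β * p.1 + γ * p.2.1),
    fun p => γ * deriv (fun u => f u p.2.2) (α + β * p.1 + γ * p.2.1),
    fun p => deriv (fun u => f (α + β * p.1 + γ * p.2.1) u) p.2.2, ?_, ⟨?_, ?_, ?_⟩, ?_⟩
  · intro p hp
    obtain ⟨d1, d2⟩ := h2 _ hp
    refine ⟨?_, ?_, d2.hasDerivAt⟩
    · have k : HasDerivAt (fun s : ℝ => α + β * s + γ * p.2.1) β p.1 := by
        simpa using (((hasDerivAt_id p.1).const_mul β).const_add α).add_const (γ * p.2.1)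
      dsimp only
      rw [mul_comm _ (deriv _ _)]
      exact HasDerivAt.comp (h := fun s : ℝ => α + β * s + γ * p.2.1) p.1 d1.hasDerivAt k
    · have k : HasDerivAt (fun s : ℝ => α + β * p.1 + γ * s) γ p.2.1 := by
        simpa using (((hasDerivAt_id p.2.1).const_mul γ).const_add (α + β * p.1))
      dsimp only
      rw [mul_comm _ (deriv _ _)]
      exact HasDerivAt.comp (h := fun s : ℝ => α + β * p.1 + γ * s) p.2.1 d1.hasDerivAt k
  · exact continuousOn_const.mul (h3.comp hs hm)
  · exact continuousOn_const.mul (h3.comp hs hm)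
  · exact h4.comp hs hm
  · intro p hp
    obtain ⟨k1, k2, k3⟩ := h5 _ hp
    refine ⟨?_, ?_, k3.trans (i1 p hp)⟩
    · rw [abs_mul]
      exact (mul_le_mul_of_nonneg_left k2 (abs_nonneg _)).trans (i2 p hp)
    · rw [abs_mul]
      exact (mul_le_mul_of_nonneg_left k2 (abs_nonneg _)).trans (i3 p hp)

lemma le_supNorm3 {A : Set (ℝ × ℝ × ℝ)} {u : ℝ → ℝ → ℝ → ℝ} {K : ℝ}
    (h : ∀ p ∈ A, |u p.1 p.2.1 p.2.2| ≤ K) {p : ℝ × ℝ × ℝ} (hp : p ∈ A) :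
    |u p.1 p.2.1 p.2.2| ≤ supNorm3 A u :=
  le_csSup ⟨K, by rintro _ ⟨p, hp, rfl⟩; exact h p hp⟩ ⟨p, hp, rfl⟩

lemma supNorm3_le {A : Set (ℝ × ℝ × ℝ)} {u : ℝ → ℝ → ℝ → ℝ} {K : ℝ} (hK : 0 ≤ K)
    (h : ∀ p ∈ A, |u p.1 p.2.1 p.2.2| ≤ K) : supNorm3 A u ≤ K :=
  Real.sSup_le (by rintro _ ⟨p, hp, rfl⟩; exact h p hp) hK

lemma supNorm3_nonneg (A : Set (ℝ × ℝ × ℝ)) (u : ℝ → ℝ → ℝ → ℝ) : 0 ≤ supNorm3 A u :=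
  Real.sSup_nonneg (by rintro _ ⟨p, hp, rfl⟩; exact abs_nonneg _)

lemma norm1E_nonneg (A B : Set (ℝ × ℝ × ℝ)) (u : ℝ → ℝ → ℝ → ℝ) : 0 ≤ norm1E A B u :=
  le_max_of_le_left (supNorm3_nonneg A u)

lemma NN4_nonneg (A B : Set (ℝ × ℝ × ℝ)) (u : Fin 4 → ℝ → ℝ → ℝ → ℝ) : 0 ≤ NN4 A B u :=
  le_max_of_le_left (le_max_of_le_left (norm1E_nonneg A B _))

lemma norm1E_le_NN4 (A B : Set (ℝ × ℝ × ℝ)) (u : Fin 4 → ℝ → ℝ → ℝ → ℝ) (i : Fin 4) :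
    norm1E A B (u i) ≤ NN4 A B u := by
  unfold NN4
  fin_cases i <;> simp

lemma FR.sharp {A : Set (ℝ × ℝ × ℝ)} {u : ℝ → ℝ → ℝ → ℝ} {K q : ℝ} (h : FR A u K)
    (hq : norm1E A A u ≤ q) : FR A u q := by
  obtain ⟨s1, s2, s3⟩ := h.reg.std
  unfold norm1E at hq
  simp only [max_le_iff] at hq
  obtain ⟨q1, q2, q3, q4⟩ := hq
  refine ⟨h.cont, fun p hp => (le_supNorm3 h.bd hp).trans q1, D1.of_std s1 s2 fun p hp => ?_⟩
  exact ⟨(le_supNorm3 (fun p hp => (s3 p hp).1) hp).trans q2,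
    (le_supNorm3 (fun p hp => (s3 p hp).2.1) hp).trans q3,
    (le_supNorm3 (fun p hp => (s3 p hp).2.2) hp).trans q4⟩

lemma isCompact_P (τ τ' a b a' b' : ℝ) : IsCompact (PsetT (Icc τ τ') a b a' b') :=
  isCompact_Icc.prod (isCompact_Icc.prod isCompact_Icc)

lemma memE.EB {c τ τ' a b a' b' R : ℝ} {u : ℝ → ℝ → ℝ → ℝ} (h : memE c τ τ' a b a' b' u)
    (hR : norm1E (PsetT (Icc τ τ') a b a' b') (Dset c τ τ' a b a' b') u ≤ R) :
    EB c τ τ' a b a' b' u R R R R := by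
  obtain ⟨h1, h2, h3, h4, h5, C, h6⟩ := h
  unfold norm1E at hR
  simp only [max_le_iff] at hR
  obtain ⟨q1, q2, q3, q4⟩ := hR
  obtain ⟨K, hK⟩ := (isCompact_P τ τ' a b a' b').exists_bound_of_continuousOn h1
  refine ⟨h1, fun p hp => (le_supNorm3 hK hp).trans q1, D1.of_std h2 ⟨h3, h4, h5⟩ fun p hp => ?_⟩
  exact ⟨(le_supNorm3 (fun p hp => (h6 p hp).1) hp).trans q2,
    (le_supNorm3 (fun p hp => (h6 p hp).2.1) hp).trans q3,
    (le_supNorm3 (fun p hp => (h6 p hp).2.2) hp).trans q4⟩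

lemma EB.mem {c τ τ' a b a' b' R : ℝ} {u : ℝ → ℝ → ℝ → ℝ} (hR : 0 ≤ R)
    (h : EB c τ τ' a b a' b' u R R R R) : memE c τ τ' a b a' b' u ∧
    norm1E (PsetT (Icc τ τ') a b a' b') (Dset c τ τ' a b a' b') u ≤ R := by
  obtain ⟨s1, s2, s3⟩ := h.reg.std
  refine ⟨⟨h.cont, s1, s2.1, s2.2.1, s2.2.2, R, s3⟩, ?_⟩
  exact max_le (supNorm3_le hR h.bd) (max_le (supNorm3_le hR fun p hp => (s3 p hp).1)
    (max_le (supNorm3_le hR fun p hp => (s3 p hp).2.1) (supNorm3_le hR fun p hp => (s3 p hp).2.2)))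

lemma EB.mono {c τ τ' a b a' b' : ℝ} {u : ℝ → ℝ → ℝ → ℝ} {K0 Kt Kx Ky R : ℝ}
    (h : EB c τ τ' a b a' b' u K0 Kt Kx Ky) (h0 : K0 ≤ R) (ht : Kt ≤ R) (hx : Kx ≤ R)
    (hy : Ky ≤ R) : EB c τ τ' a b a' b' u R R R R :=
  ⟨h.cont, fun p hp => (h.bd p hp).trans h0, h.reg.mono Subset.rfl ht hx hy⟩

lemma FR.of_le {A : Set (ℝ × ℝ × ℝ)} {u v : ℝ → ℝ → ℝ → ℝ} {B : Set (ℝ × ℝ × ℝ)} {q : ℝ}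
    (h : ∃ K, FR B v K) (huv : u = v) (hAB : A ⊆ B) (hq : norm1E A A u ≤ q) : FR A u q := by
  subst huv
  obtain ⟨K, hK⟩ := h
  exact (hK.mono hAB).sharp hq

lemma FR.swap_ex {A : Set (ℝ × ℝ × ℝ)} {u : ℝ → ℝ → ℝ → ℝ} (h : ∃ K, FR A u K) :
    ∃ K, FR {p | (p.1, p.2.2, p.2.1) ∈ A} (fun t x y => u t y x) K :=
  h.imp fun _ hK => hK.swap

lemma EB.congr_fun {c τ τ' a b a' b' : ℝ} {u v : ℝ → ℝ → ℝ → ℝ} {K0 Kt Kx Ky : ℝ}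
    (h : EB c τ τ' a b a' b' u K0 Kt Kx Ky) (e : v = u) :
    EB c τ τ' a b a' b' v K0 Kt Kx Ky := e ▸ h

section data
variable {c τ τ' a₁ b₁ a₂ b₂ : ℝ} {N0 : Fin 4 → ℝ → ℝ → ℝ} {B1 B2 B3 B4 : ℝ → ℝ → ℝ}

lemma FR_bar0 (hdata : NiceData (Icc τ τ') τ a₁ b₁ a₂ b₂ N0 B1 B2 B3 B4) (i : Fin 4) :
    FR (domBar0 c τ a₁ b₁ a₂ b₂ (Icc τ τ') i) (barN0 c τ N0 i)
      (qval c τ a₁ b₁ a₂ b₂ (Icc τ τ') N0 B1 B2 B3 B4) := by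
  have hq : nb0 c τ a₁ b₁ a₂ b₂ (Icc τ τ') N0 i ≤
      qval c τ a₁ b₁ a₂ b₂ (Icc τ τ') N0 B1 B2 B3 B4 := by
    unfold qval
    fin_cases i <;> simp
  have hN := hdata.1
  fin_cases i
  · refine FR.of_le (FR_aff (hN 0).1 (c * τ) (-c) 1) ?_ ?_ hq
    · funext t x y
      simp only [barN0, spX, spY]
      simp
      congr 1; ring
    · rintro p ⟨-, hp⟩
      simp [spX, spY] at hp
      simp only [mem_ofPred_eq]
      convert hp using 2; ring
  · refine FR.of_le (FR.swap_ex (FR_aff (hN 1).1.swap (c * τ) (-c) 1)) ?_ ?_ hq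
    · funext t x y
      simp only [barN0, spX, spY]
      simp
      congr 1; ring
    · rintro p ⟨-, hp⟩
      simp [spX, spY] at hp
      simp only [mem_ofPred_eq]
      convert hp using 2; ring
  · refine FR.of_le (FR.swap_ex (FR_aff (hN 2).1.swap (-c * τ) c 1)) ?_ ?_ hq
    · funext t x y
      simp only [barN0, spX, spY]
      simp
      congr 1; ring
    · rintro p ⟨-, hp⟩
      simp [spX, spY] at hp
      simp only [mem_ofPred_eq]
      convert hp using 2; ring
  · refine FR.of_le (FR_aff (hN 3).1 (-c * τ) c 1) ?_ ?_ hq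
    · funext t x y
      simp only [barN0, spX, spY]
      simp
      congr 1; ring
    · rintro p ⟨-, hp⟩
      simp [spX, spY] at hp
      simp only [mem_ofPred_eq]
      convert hp using 2; ring

lemma FR_barB (hdata : NiceData (Icc τ τ') τ a₁ b₁ a₂ b₂ N0 B1 B2 B3 B4) (i : Fin 4) :
    FR (domBarB c a₁ b₁ a₂ b₂ (Icc τ τ') i) (barB c a₁ b₁ a₂ b₂ B1 B2 B3 B4 i)
      (qval c τ a₁ b₁ a₂ b₂ (Icc τ τ') N0 B1 B2 B3 B4) := by
  have hq : nbB c a₁ b₁ a₂ b₂ (Icc τ τ') B1 B2 B3 B4 i ≤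
      qval c τ a₁ b₁ a₂ b₂ (Icc τ τ') N0 B1 B2 B3 B4 := by
    unfold qval
    fin_cases i <;> simp
  obtain ⟨-, ⟨s1, -⟩, ⟨s2, -⟩, ⟨s3, -⟩, ⟨s4, -⟩, -⟩ := hdata
  have e1 : ∀ a t x : ℝ, a / c + 1 * t + (-1 / c) * x = t - (x - a) / c := fun a t x => by ring
  have e2 : ∀ a t x : ℝ, -a / c + 1 * t + (1 / c) * x = t - (a - x) / c := fun a t x => by ring
  fin_cases i
  · refine FR.of_le (FR_aff s1 (a₁ / c) 1 (-1 / c)) ?_ ?_ hq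
    · funext t x y
      simp only [e1]; rfl
    · rintro p ⟨hp, hp2⟩
      simp only [mem_ofPred_eq, e1]
      exact ⟨hp2, hp.2.2⟩
  · refine FR.of_le (FR.swap_ex (FR_aff s2 (a₂ / c) 1 (-1 / c))) ?_ ?_ hq
    · funext t x y
      simp only [e1]; rfl
    · rintro p ⟨hp, hp2⟩
      simp only [mem_ofPred_eq, e1]
      exact ⟨hp2, hp.2.1⟩
  · refine FR.of_le (FR.swap_ex (FR_aff s3 (-b₂ / c) 1 (1 / c))) ?_ ?_ hq
    · funext t x y
      simp only [e2]; rfl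
    · rintro p ⟨hp, hp2⟩
      simp only [mem_ofPred_eq, e2]
      exact ⟨hp2, hp.2.1⟩
  · refine FR.of_le (FR_aff s4 (-b₁ / c) 1 (1 / c)) ?_ ?_ hq
    · funext t x y
      simp only [e2]; rfl
    · rintro p ⟨hp, hp2⟩
      simp only [mem_ofPred_eq, e2]
      exact ⟨hp2, hp.2.2⟩

lemma qval_nonneg : 0 ≤ qval c τ a₁ b₁ a₂ b₂ (Icc τ τ') N0 B1 B2 B3 B4 :=
  le_max_of_le_left (le_max_of_le_left (le_max_of_le_left (norm1E_nonneg _ _ _)))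

lemma Tcal_EB {S R : ℝ} (hc : 0 < c) (hS : 0 < S) (hτ : τ < τ') (ha : a₁ < b₁) (hb : a₂ < b₂)
    (hdata : NiceData (Icc τ τ') τ a₁ b₁ a₂ b₂ N0 B1 B2 B3 B4) (hR : 0 ≤ R)
    {M : Fin 4 → ℝ → ℝ → ℝ → ℝ} (h : ∀ i, EB c τ τ' a₁ b₁ a₂ b₂ (M i) R R R R) {Z : ℝ}
    (hZ : Z = c * S * (8 + 4 / c + (8 + 8 * c) * (τ' - τ)) * R ^ 2 +
      qval c τ a₁ b₁ a₂ b₂ (Icc τ τ') N0 B1 B2 B3 B4) (i : Fin 4) :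
    EB c τ τ' a₁ b₁ a₂ b₂ (Tcal c S τ a₁ b₁ a₂ b₂ N0 B1 B2 B3 B4 M i) Z Z Z Z := by
  have hQ := QQ_EB hc hS hR h
  set q := qval c τ a₁ b₁ a₂ b₂ (Icc τ τ') N0 B1 B2 B3 B4 with hq
  have hK0 : 0 ≤ 4 * c * S * R ^ 2 := by positivity
  have hK : 0 ≤ 8 * c * S * R ^ 2 := by positivity
  have hΔ : 0 < τ' - τ := by linarith
  have t1 : 0 ≤ c * S * R ^ 2 := by positivity
  have t2 : 0 ≤ c * S * R ^ 2 * (1 / c) := by positivity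
  have t3 : 0 ≤ c * S * R ^ 2 * (τ' - τ) := by positivity
  have t4 : 0 ≤ c * S * R ^ 2 * (τ' - τ) * c := by positivity
  have hZ' : Z = 8 * (c * S * R ^ 2) + 4 * (c * S * R ^ 2 * (1 / c)) +
      8 * (c * S * R ^ 2 * (τ' - τ)) + 8 * (c * S * R ^ 2 * (τ' - τ) * c) + q := by
    rw [hZ]; ring
  have z0 : 4 * c * S * R ^ 2 * (τ' - τ) + q ≤ Z := by rw [hZ']; linarith
  have z1 : 2 * (4 * c * S * R ^ 2) + c * (8 * c * S * R ^ 2) * (τ' - τ) + q ≤ Z := by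
    rw [hZ']; linarith
  have z2 : 4 * c * S * R ^ 2 / c + 8 * c * S * R ^ 2 * (τ' - τ) + q ≤ Z := by
    rw [hZ', div_eq_mul_one_div]; linarith
  have z3 : 8 * c * S * R ^ 2 * (τ' - τ) + q ≤ Z := by rw [hZ']; linarith
  have n := fun i => FR_bar0 (c := c) hdata i
  have m := fun i => FR_barB (c := c) hdata i
  rw [← hq] at n m
  obtain ⟨-, -, -, -, -, c1, c2, c3, c4⟩ := hdata
  have hct : ∀ t : ℝ, t ∈ Icc τ τ' → 0 ≤ c * (t - τ) := fun t ht =>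
    mul_nonneg hc.le (by linarith [ht.1])
  -- foot of the characteristic
  have ft : ∀ t d : ℝ, t ∈ Icc τ τ' → 0 ≤ d → d ≤ c * (t - τ) → t - d / c ∈ Icc τ τ' := by
    intro t d ht hd hd2
    have k1 : d / c ≤ t - τ := by rw [div_le_iff₀ hc]; linarith
    have k2 : 0 ≤ d / c := by positivity
    exact ⟨by linarith, by linarith [ht.2]⟩
  have fe : ∀ t d : ℝ, d = c * (t - τ) → t - d / c = τ := by
    intro t d hd; rw [hd]; field_simp; ring
  fin_cases i
  · have := core hc hτ ha hb hK0 hK hQ ((n 0).mono ?_) ((m 0).mono ?_) ?_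
    · refine (EB.mono this z0 z1 z2 z3).congr_fun ?_
      funext t x y
      simp [Tcal, UU, barN0, barB, spX, spY]
    · rintro p ⟨hp, h⟩
      refine ⟨hp, ?_⟩
      simp only [spX, spY, mem_ofPred_eq]
      simp
      have := hct _ hp.1
      exact ⟨⟨h, by linarith [hp.2.1.2]⟩, hp.2.2⟩
    · rintro p ⟨hp, h⟩
      refine ⟨hp, ft _ _ hp.1 (by linarith [hp.2.1.1]) (by linarith)⟩
    · intro p hp h
      have e : p.1 - (p.2.1 - a₁) / c = τ := fe _ _ (by linarith)
      simp [barN0, barB, spX, spY, e, h, c1 _ hp.2.2]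
  · have := (core hc hτ hb ha hK0 hK hQ.swap.smulneg ((n 1).swap.mono ?_) ((m 1).swap.mono ?_) ?_).swap
    · refine (EB.mono this z0 z1 z3 z2).congr_fun ?_
      funext t x y
      simp [Tcal, UU, barN0, barB, spX, spY]
    · rintro p ⟨hp, h⟩
      refine ⟨⟨hp.1, hp.2.2, hp.2.1⟩, ?_⟩
      simp only [spX, spY, mem_ofPred_eq]
      simp
      have := hct _ hp.1
      exact ⟨hp.2.2, ⟨h, by linarith [hp.2.1.2]⟩⟩
    · rintro p ⟨hp, h⟩
      refine ⟨⟨hp.1, hp.2.2, hp.2.1⟩, ft _ _ hp.1 (by dsimp only; linarith [hp.2.1.1])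
        (by dsimp only; linarith)⟩
    · intro p hp h
      have e : p.1 - (p.2.1 - a₂) / c = τ := fe _ _ (by linarith)
      simp [barN0, barB, spX, spY, e, h, c2 _ hp.2.2]
  · have := (coreL hc hτ hb ha hK0 hK hQ.swap.smulneg ((n 2).swap.mono ?_) ((m 2).swap.mono ?_) ?_).swap
    · refine (EB.mono this z0 z1 z3 z2).congr_fun ?_
      funext t x y
      simp [Tcal, UL, barN0, barB, spX, spY]
    · rintro p ⟨hp, h⟩
      refine ⟨⟨hp.1, hp.2.2, hp.2.1⟩, ?_⟩
      simp only [spX, spY, mem_ofPred_eq]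
      simp
      have := hct _ hp.1
      exact ⟨hp.2.2, ⟨by linarith [hp.2.1.1], by linarith⟩⟩
    · rintro p ⟨hp, h⟩
      refine ⟨⟨hp.1, hp.2.2, hp.2.1⟩, ft _ _ hp.1 (by dsimp only; linarith [hp.2.1.2])
        (by dsimp only; linarith)⟩
    · intro p hp h
      have e : p.1 - (b₂ - p.2.1) / c = τ := fe _ _ (by linarith)
      simp [barN0, barB, spX, spY, e, h, c3 _ hp.2.2]
  · have := coreL hc hτ ha hb hK0 hK hQ ((n 3).mono ?_) ((m 3).mono ?_) ?_
    · refine (EB.mono this z0 z1 z2 z3).congr_fun ?_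
      funext t x y
      simp [Tcal, UL, barN0, barB, spX, spY]
    · rintro p ⟨hp, h⟩
      refine ⟨hp, ?_⟩
      simp only [spX, spY, mem_ofPred_eq]
      simp
      have := hct _ hp.1
      exact ⟨⟨by linarith [hp.2.1.1], by linarith⟩, hp.2.2⟩
    · rintro p ⟨hp, h⟩
      refine ⟨hp, ft _ _ hp.1 (by linarith [hp.2.1.2]) (by linarith)⟩
    · intro p hp h
      have e : p.1 - (b₁ - p.2.1) / c = τ := fe _ _ (by linarith)
      simp [barN0, barB, spX, spY, e, h, c4 _ hp.2.2]

end data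

lemma EB.lip {c τ τ' a b a' b' Z : ℝ} (hc : 0 < c) (hτ : τ < τ') (ha : a < b) (hb : a' < b')
    (hZ : 0 ≤ Z) {u : ℝ → ℝ → ℝ → ℝ} (h : EB c τ τ' a b a' b' u Z Z Z Z) {p p' : ℝ × ℝ × ℝ}
    (hp : p ∈ PsetT (Icc τ τ') a b a' b') (hp' : p' ∈ PsetT (Icc τ τ') a b a' b') :
    |u p.1 p.2.1 p.2.2 - u p'.1 p'.2.1 p'.2.2| ≤ 3 * Z * dist p p' := by
  have h1 := h.lip_t hc ha hb hp.1 hp'.1 hp.2.1 hp.2.2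
  have h2 := h.lip_x hτ hb hp'.1 hp.2.1 hp'.2.1 hp.2.2
  have h3 := h.lip_y hτ ha hp'.1 hp'.2.1 hp.2.2 hp'.2.2
  have d1 : |p.1 - p'.1| ≤ dist p p' := le_max_left _ _
  have d23 : dist p.2 p'.2 ≤ dist p p' := le_max_right _ _
  have d2 : |p.2.1 - p'.2.1| ≤ dist p p' := (le_max_left _ _ : _ ≤ dist p.2 p'.2).trans d23
  have d3 : |p.2.2 - p'.2.2| ≤ dist p p' := (le_max_right _ _ : _ ≤ dist p.2 p'.2).trans d23
  have k1 := mul_le_mul_of_nonneg_left d1 hZ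
  have k2 := mul_le_mul_of_nonneg_left d2 hZ
  have k3 := mul_le_mul_of_nonneg_left d3 hZ
  have t1 := abs_sub_le (u p.1 p.2.1 p.2.2) (u p'.1 p.2.1 p.2.2) (u p'.1 p'.2.1 p'.2.2)
  have t2 := abs_sub_le (u p'.1 p.2.1 p.2.2) (u p'.1 p'.2.1 p.2.2) (u p'.1 p'.2.1 p'.2.2)
  linarith

lemma compact_seq {c τ τ' a b a' b' Z : ℝ} (hc : 0 < c) (hτ : τ < τ') (ha : a < b) (hb : a' < b')
    (hZ : 0 ≤ Z) {U : ℕ → Fin 4 → ℝ → ℝ → ℝ → ℝ}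
    (h : ∀ n i, EB c τ τ' a b a' b' (U n i) Z Z Z Z) :
    ∃ φ : ℕ → ℕ, StrictMono φ ∧ ∃ G : Fin 4 → ℝ → ℝ → ℝ → ℝ,
      (∀ i, Cont3 (G i) (PsetT (Icc τ τ') a b a' b')) ∧
      ∀ i : Fin 4, TendstoUniformlyOn
        (fun n (p : ℝ × ℝ × ℝ) => U (φ n) i p.1 p.2.1 p.2.2)
        (fun p => G i p.1 p.2.1 p.2.2) Filter.atTop (PsetT (Icc τ τ') a b a' b') := by
  set P := PsetT (Icc τ τ') a b a' b' with hP
  have : CompactSpace P := isCompact_iff_compactSpace.1 (isCompact_P τ τ' a b a' b')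
  have hL : ∀ n, LipschitzWith (3 * Z).toNNReal
      (fun (p : P) (i : Fin 4) => U n i p.1.1 p.1.2.1 p.1.2.2) := by
    intro n
    refine LipschitzWith.of_dist_le_mul fun p p' => ?_
    rw [Real.coe_toNNReal _ (by positivity), dist_pi_le_iff (by positivity)]
    intro i
    exact (h n i).lip hc hτ ha hb hZ p.2 p'.2
  let f : ℕ → BoundedContinuousFunction P (Fin 4 → ℝ) := fun n =>
    BoundedContinuousFunction.mkOfCompact ⟨_, (hL n).continuous⟩
  have hf : ∀ n p i, f n p i = U n i p.1.1 p.1.2.1 p.1.2.2 := fun n p i => rfl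
  have hcomp : IsCompact (closure (range f)) := by
    refine BoundedContinuousFunction.arzela_ascoli (Metric.closedBall 0 Z)
      (isCompact_closedBall _ _) _ ?_ ?_
    · rintro _ p ⟨n, rfl⟩
      rw [mem_closedBall_zero_iff, pi_norm_le_iff_of_nonneg hZ]
      intro i
      exact (h n i).bd p.1 p.2
    · refine (LipschitzWith.uniformEquicontinuous _ (3 * Z).toNNReal ?_).equicontinuous
      rintro ⟨_, n, rfl⟩
      exact hL n
  obtain ⟨g, -, φ, hφ, hg⟩ := hcomp.tendsto_subseq (fun n => subset_closure (mem_range_self n))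
  classical
  refine ⟨φ, hφ, fun i t x y => if hp : (t, x, y) ∈ P then g ⟨_, hp⟩ i else 0, ?_, ?_⟩
  · intro i
    unfold Cont3
    rw [continuousOn_iff_continuous_domRestrict]
    have : Continuous fun p : P => g p i := (continuous_apply i).comp g.continuous
    convert! this using 1
    funext p
    simp
  · intro i
    rw [Metric.tendstoUniformlyOn_iff]
    intro ε hε
    filter_upwards [Metric.tendsto_nhds.1 hg ε hε] with n hn p hp
    have e : (p.1, p.2.1, p.2.2) ∈ P := hp
    simp only [dif_pos e]
    rw [dist_comm]
    refine lt_of_le_of_lt ?_ hn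
    exact (dist_le_pi_dist (f (φ n) ⟨p, hp⟩) (g ⟨p, hp⟩) i).trans
      (BoundedContinuousFunction.dist_coe_le_dist (⟨p, hp⟩ : P))

/-- `𝒩(𝒯(M)) ≤ p·𝒩(M)² + q`; hence `𝒯(𝓜_R) ⊆ 𝓜_(pR²+q)` and `𝒯` is compact on `𝓜_R`. -/
theorem Tcal_bound_and_compact
    (c S τ τ' a₁ b₁ a₂ b₂ : ℝ) (hc : 0 < c) (hS : 0 < S)
    (hτ : τ < τ') (ha : a₁ < b₁) (hb : a₂ < b₂)
    (N0 : Fin 4 → ℝ → ℝ → ℝ) (B1 B2 B3 B4 : ℝ → ℝ → ℝ)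
    (hdata : NiceData (Icc τ τ') τ a₁ b₁ a₂ b₂ N0 B1 B2 B3 B4) :
    (∀ M : Fin 4 → ℝ → ℝ → ℝ → ℝ, (∀ i, memE c τ τ' a₁ b₁ a₂ b₂ (M i)) →
      NN4 (PsetT (Icc τ τ') a₁ b₁ a₂ b₂) (Dset c τ τ' a₁ b₁ a₂ b₂) (Tcal c S τ a₁ b₁ a₂ b₂ N0 B1 B2 B3 B4 M) ≤
        c * S * (8 + 4 / c + (8 + 8 * c) * (τ' - τ)) * (NN4 (PsetT (Icc τ τ') a₁ b₁ a₂ b₂) (Dset c τ τ' a₁ b₁ a₂ b₂) M) ^ 2 + qval c τ a₁ b₁ a₂ b₂ (Icc τ τ') N0 B1 B2 B3 B4) ∧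
    (∀ R > 0, ∀ M ∈ MR c τ τ' a₁ b₁ a₂ b₂ R,
      Tcal c S τ a₁ b₁ a₂ b₂ N0 B1 B2 B3 B4 M ∈ MR c τ τ' a₁ b₁ a₂ b₂ (c * S * (8 + 4 / c + (8 + 8 * c) * (τ' - τ)) * R ^ 2 + qval c τ a₁ b₁ a₂ b₂ (Icc τ τ') N0 B1 B2 B3 B4)) ∧
    (∀ R > 0, ∀ F : ℕ → Fin 4 → ℝ → ℝ → ℝ → ℝ,
      (∀ n, F n ∈ MR c τ τ' a₁ b₁ a₂ b₂ R) →
      ∃ φ : ℕ → ℕ, StrictMono φ ∧ ∃ G : Fin 4 → ℝ → ℝ → ℝ → ℝ,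
        (∀ i, Cont3 (G i) (PsetT (Icc τ τ') a₁ b₁ a₂ b₂)) ∧
        ∀ i : Fin 4, TendstoUniformlyOn
          (fun n (p : ℝ × ℝ × ℝ) => Tcal c S τ a₁ b₁ a₂ b₂ N0 B1 B2 B3 B4 (F (φ n)) i p.1 p.2.1 p.2.2)
          (fun p => G i p.1 p.2.1 p.2.2) Filter.atTop (PsetT (Icc τ τ') a₁ b₁ a₂ b₂)) := by
  have hp0 : ∀ R : ℝ, 0 ≤ c * S * (8 + 4 / c + (8 + 8 * c) * (τ' - τ)) * R ^ 2 +
      qval c τ a₁ b₁ a₂ b₂ (Icc τ τ') N0 B1 B2 B3 B4 := by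
    intro R
    have hΔ : 0 < τ' - τ := by linarith
    exact add_nonneg (by positivity) qval_nonneg
  have key : ∀ R : ℝ, ∀ M ∈ MR c τ τ' a₁ b₁ a₂ b₂ R, ∀ i,
      EB c τ τ' a₁ b₁ a₂ b₂ (Tcal c S τ a₁ b₁ a₂ b₂ N0 B1 B2 B3 B4 M i)
        (c * S * (8 + 4 / c + (8 + 8 * c) * (τ' - τ)) * R ^ 2 +
          qval c τ a₁ b₁ a₂ b₂ (Icc τ τ') N0 B1 B2 B3 B4)
        (c * S * (8 + 4 / c + (8 + 8 * c) * (τ' - τ)) * R ^ 2 +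
          qval c τ a₁ b₁ a₂ b₂ (Icc τ τ') N0 B1 B2 B3 B4)
        (c * S * (8 + 4 / c + (8 + 8 * c) * (τ' - τ)) * R ^ 2 +
          qval c τ a₁ b₁ a₂ b₂ (Icc τ τ') N0 B1 B2 B3 B4)
        (c * S * (8 + 4 / c + (8 + 8 * c) * (τ' - τ)) * R ^ 2 +
          qval c τ a₁ b₁ a₂ b₂ (Icc τ τ') N0 B1 B2 B3 B4) := by
    rintro R M ⟨hM, hMR⟩ i
    exact Tcal_EB hc hS hτ ha hb hdata ((NN4_nonneg _ _ M).trans hMR)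
      (fun j => (hM j).EB ((norm1E_le_NN4 _ _ M j).trans hMR)) rfl i
  have key2 : ∀ R : ℝ, ∀ M ∈ MR c τ τ' a₁ b₁ a₂ b₂ R,
      Tcal c S τ a₁ b₁ a₂ b₂ N0 B1 B2 B3 B4 M ∈ MR c τ τ' a₁ b₁ a₂ b₂
        (c * S * (8 + 4 / c + (8 + 8 * c) * (τ' - τ)) * R ^ 2 +
          qval c τ a₁ b₁ a₂ b₂ (Icc τ τ') N0 B1 B2 B3 B4) := by
    intro R M hM
    have k := fun i => (key R M hM i).mem (hp0 R)
    exact ⟨fun i => (k i).1, max_le (max_le (k 0).2 (k 1).2) (max_le (k 2).2 (k 3).2)⟩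
  refine ⟨fun M hM => (key2 _ M ⟨hM, le_rfl⟩).2, fun R _ M hM => key2 R M hM, fun R _ F hF => ?_⟩
  exact compact_seq hc hτ ha hb (hp0 R) (fun n i => key R (F n) (hF n) i)

end
end
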